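/- arXiv:1903.12353 — 6 statements merged into one kernel-verified Lean document; each statement's English description precedes it below -/
import Mathlib

section
/- Let b be a prime and let P be a digital net over F_b with generating matrices C_1,...,C_s in F_b^{n x m}, with dual net P^perp. Then for every z in N_0, the number of k in P^perp \ {0} with mu_1(k) = z equals 0 if z < mu_1(P^perp), and is at most b^{z - mu_1(P^perp) + 1} (z+1)^{s-1} if z >= mu_1(P^perp). -/
open MeasureTheory Finset Matrix

noncomputable section

/-- The `i`-th `b`-adic digit of a natural number `k`. -/
def ndigit (b k i : ℕ) : ℕ := k / b ^ i % b

/-- The truncated digit vector `ν_n(k) ∈ F_b^n`. -/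
def digitVec (b n : ℕ) (k : ℕ) : Fin n → ZMod b := fun i => (ndigit b k i.val : ZMod b)

/-- The dual net of the digital net with generating matrices `C_1,...,C_s ∈ F_b^{n×m}`. -/
def dualNet {s n m : ℕ} (b : ℕ) (C : Fin s → Matrix (Fin n) (Fin m) (ZMod b)) :
    Set (Fin s → ℕ) :=
  {k | ∑ j, (C j)ᵀ.mulVec (digitVec b n (k j)) = 0}

/-- The list of positions (in decreasing order) of the nonzero `b`-adic digits of `k`;
position `i` corresponds to the digit of `b^i`, i.e. to the exponent `c - 1` in the paper. -/
def nzPos (b k : ℕ) : List ℕ :=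
  (((Finset.range k).filter fun i => ndigit b k i ≠ 0).sort (· ≤ ·)).reverse

/-- The Dick weight function `μ_α` (for `α = 1` the NRT weight). -/
def dickWeight (b α k : ℕ) : ℕ := (((nzPos b k).take α).map (· + 1)).sum

/-- The Dick weight of a vector of nonnegative integers. -/
def dickWeightV (b α : ℕ) {s : ℕ} (k : Fin s → ℕ) : ℕ := ∑ j, dickWeight b α (k j)

/-- `μ_α(P^⊥)`, the minimal Dick weight over nonzero elements of the dual net. -/
def minWeight {s n m : ℕ} (b α : ℕ) (C : Fin s → Matrix (Fin n) (Fin m) (ZMod b)) : ℕ :=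
  sInf (dickWeightV b α '' {k | k ∈ dualNet b C ∧ k ≠ 0})

/-- The list `κ_1 b^{c_1-1}, κ_2 b^{c_2-1}, ...` of nonzero terms of the `b`-adic
expansion of `k`, in decreasing order of the exponents. -/
def nzTerms (b k : ℕ) : List ℕ := (nzPos b k).map fun i => ndigit b k i * b ^ i

/-- `k^{(p)}`: the number `k` with its `p` most significant nonzero digits removed. -/
def trunc (b p k : ℕ) : ℕ := ((nzTerms b k).drop p).sum

/-- The term `κ_p b^{c_p-1}` (with the convention `κ_0 b^{c_0-1} = 0`). -/
def topTerm (b p k : ℕ) : ℕ := if p = 0 then 0 else (nzTerms b k).getD (p - 1) 0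

/-- `(k,l)` is of type `(p,q)`. -/
def IsType (b p q k l : ℕ) : Prop :=
  if k = l then p = 0 ∧ q = 0
  else trunc b p k = trunc b q l ∧ topTerm b p k ≠ topTerm b q l

/-- `(k,l) ∈ T_{≥ α}`: `(k,l)` is of type `(p,q)` for some `p + q ≥ α`. -/
def TGe (b α k l : ℕ) : Prop := ∃ p q : ℕ, α ≤ p + q ∧ IsType b p q k l

/-- `(k,l) ∈ T_{≥ α}` for vectors: some coordinate pair lies in `T_{≥ α}`. -/
def TGeV (b α : ℕ) {s : ℕ} (k l : Fin s → ℕ) : Prop := ∃ j, TGe b α (k j) (l j)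

/-- The `(i+1)`-st `b`-adic digit `ξ_{i+1}` of `x ∈ [0,1]` (for `x ≠ 1` the unique expansion
with infinitely many digits different from `b-1`; for `x = 1` all digits equal `b-1`). -/
def rdigit (b : ℕ) (x : ℝ) (i : ℕ) : ℕ :=
  if x = 1 then b - 1 else (⌊x * (b : ℝ) ^ (i + 1)⌋).toNat % b

/-- The `k`-th `b`-adic Walsh function. -/
def walsh (b k : ℕ) (x : ℝ) : ℂ :=
  Complex.exp (2 * (Real.pi : ℂ) * Complex.I *
    ((∑ i ∈ Finset.range k, ndigit b k i * rdigit b x i : ℕ) : ℂ) / (b : ℂ))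

/-- The multivariate `b`-adic Walsh function. -/
def walshV (b : ℕ) {s : ℕ} (k : Fin s → ℕ) (x : Fin s → ℝ) : ℂ := ∏ j, walsh b (k j) (x j)

/-- The unit cube `[0,1]^s`. -/
def cube (s : ℕ) : Set (Fin s → ℝ) := Set.univ.pi fun _ => Set.Icc 0 1

/-- The `(k,l)`-th Walsh coefficient of a kernel `K : [0,1]^s × [0,1]^s → ℝ`. -/
def walshCoeff (b : ℕ) {s : ℕ} (K : (Fin s → ℝ) → (Fin s → ℝ) → ℝ) (k l : Fin s → ℕ) : ℂ :=
  ∫ x in cube s, ∫ y in cube s,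
    (K x y : ℂ) * (starRingEnd ℂ) (walshV b k x) * walshV b l y

/-- The `b`-adic digital shift `x ⊕ y` of reals `x, y ∈ [0,1]`. -/
def dshift (b : ℕ) (x y : ℝ) : ℝ :=
  ∑' i : ℕ, (((rdigit b x i + rdigit b y i) % b : ℕ) : ℝ) / (b : ℝ) ^ (i + 1)

/-- Componentwise digital shift of vectors in `[0,1]^s`. -/
def dshiftV (b : ℕ) {s : ℕ} (x y : Fin s → ℝ) : Fin s → ℝ := fun j => dshift b (x j) (y j)

/-- The `h`-th point of the digital net with generating matrices `C_1,...,C_s ∈ F_b^{n×m}`. -/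
def netPoint {s n m : ℕ} (b : ℕ) (C : Fin s → Matrix (Fin n) (Fin m) (ZMod b)) (h : ℕ) :
    Fin s → ℝ :=
  fun j => ∑ i : Fin n, (((C j).mulVec (digitVec b m h) i).val : ℝ) / (b : ℝ) ^ (i.val + 1)

open Classical in
/-- The squared `L_2`-discrepancy of the point multiset `pts 0, ..., pts (N-1)` in `[0,1]^s`. -/
def sqL2 {s : ℕ} (N : ℕ) (pts : ℕ → (Fin s → ℝ)) : ℝ :=
  ∫ y in cube s,
    ((∑ h ∈ Finset.range N, if ∀ j, 0 ≤ pts h j ∧ pts h j < y j then (1 : ℝ) else 0) / N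
      - ∏ j, y j) ^ 2

/-- The Bernoulli polynomial `B_r` evaluated at a real `x`. -/
def bpoly (r : ℕ) (x : ℝ) : ℝ := Polynomial.aeval x (Polynomial.bernoulli r)

/-- The one-dimensional reproducing kernel `K_α` of the Sobolev space of smoothness `α`. -/
def sobKer1 (α : ℕ) (x y : ℝ) : ℝ :=
  ∑ r ∈ Finset.range (α + 1), bpoly r x * bpoly r y / ((r.factorial : ℝ)) ^ 2
    + (-1 : ℝ) ^ (α + 1) * bpoly (2 * α) |x - y| / ((2 * α).factorial : ℝ)

/-- The `s`-fold product kernel `K_{α,s}`. -/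
def sobKer (α : ℕ) {s : ℕ} (x y : Fin s → ℝ) : ℝ := ∏ j, sobKer1 α (x j) (y j)

/-- The constant `C_{τ,b}`. -/
def Ctau (b τ : ℕ) : ℝ :=
  if τ ≤ 1 then 1 / (2 * Real.sin (Real.pi / b))
  else (1 + 1 / (b : ℝ) + 1 / ((b : ℝ) * ((b : ℝ) + 1))) ^ (τ - 2)
      / (2 * Real.sin (Real.pi / b)) ^ τ

end

lemma aux_diff (b : ℕ) (hb : b.Prime) (d : ℕ) : ∀ k l : ℕ, k / b ^ d = l / b ^ d →
    ∃ r, r < b ^ d ∧ (∀ i, (ndigit b r i : ZMod b) = ndigit b k i - ndigit b l i) ∧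
      (r = 0 → k = l) := by
  haveI : NeZero b := ⟨hb.ne_zero⟩
  have hb0 : 0 < b := hb.pos
  induction d with
  | zero =>
    intro k l h
    simp at h
    subst h
    exact ⟨0, by simp, by simp [ndigit], by simp⟩
  | succ d ih =>
    intro k l h
    obtain ⟨r, hr, hdig, hz⟩ := ih (k / b) (l / b) (by
      rw [Nat.div_div_eq_div_mul, Nat.div_div_eq_div_mul, ← pow_succ']; exact h)
    have hlt := ZMod.val_lt ((k : ZMod b) - (l : ZMod b))
    have hcast : ((((k : ZMod b) - (l : ZMod b)).val : ℕ) : ZMod b) = (k : ZMod b) - (l : ZMod b) := by simp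
    set f := ((k : ZMod b) - (l : ZMod b)).val with hf
    refine ⟨f + b * r, ?_, ?_, ?_⟩
    · rw [pow_succ']
      have : b * (r + 1) ≤ b * b ^ d := Nat.mul_le_mul_left _ hr
      rw [mul_add] at this
      omega
    · intro i
      cases i with
      | zero => simp [ndigit, hcast]
      | succ i =>
        have h1 : ∀ x, ndigit b x (i + 1) = ndigit b (x / b) i := by
          intro x
          simp only [ndigit]
          rw [Nat.div_div_eq_div_mul, ← pow_succ']
        rw [h1, h1, h1, ← hdig, Nat.add_mul_div_left _ _ hb0, Nat.div_eq_of_lt hlt, zero_add]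
    · intro h0
      have hf0 : f = 0 := by omega
      have hr0 : r = 0 := by
        have : b * r = 0 := by omega
        rcases Nat.mul_eq_zero.mp this with h | h <;> omega
      have h1 := hz hr0
      rw [hf0] at hcast
      have h2 : (k : ZMod b) = l := by
        have := hcast.symm
        simp only [Nat.cast_zero] at this
        exact sub_eq_zero.mp this
      have h3 : k % b = l % b := (ZMod.natCast_eq_natCast_iff' _ _ _).mp h2
      rw [← Nat.div_add_mod k b, ← Nat.div_add_mod l b, h1, h3]

lemma aux_mem (b k i : ℕ) (hb : b.Prime) : i ∈ nzPos b k ↔ ndigit b k i ≠ 0 := by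
  simp only [nzPos, List.mem_reverse, Finset.mem_sort, Finset.mem_filter, Finset.mem_range]
  refine ⟨fun h => h.2, fun h => ⟨?_, h⟩⟩
  by_contra hk
  apply h
  have : k < b ^ i := lt_of_le_of_lt (not_lt.mp hk) (Nat.lt_pow_self hb.one_lt)
  simp [ndigit, Nat.div_eq_of_lt this]

lemma aux_upper (b k d : ℕ) (hb : b.Prime) (h : k < b ^ d) : dickWeight b 1 k ≤ d := by
  unfold dickWeight
  rcases hL : nzPos b k with _ | ⟨a, L⟩
  · simp
  · have ha : ndigit b k a ≠ 0 := (aux_mem b k a hb).mp (by simp [hL])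
    simp only [List.take_succ_cons, List.take_zero, List.map_cons, List.map_nil, List.sum_cons,
      List.sum_nil, add_zero]
    by_contra hd
    apply ha
    have : k < b ^ a := lt_of_lt_of_le h (Nat.pow_le_pow_right hb.pos (by omega))
    simp [ndigit, Nat.div_eq_of_lt this]

lemma aux_lower (b k : ℕ) (hb : b.Prime) : k < b ^ dickWeight b 1 k := by
  by_contra hk
  rw [not_lt] at hk
  have hk0 : k ≠ 0 := by
    have : 0 < b ^ dickWeight b 1 k := Nat.pow_pos hb.pos
    omega
  have hlog : dickWeight b 1 k ≤ Nat.log b k := Nat.le_log_of_pow_le hb.one_lt hk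
  have hdig : ndigit b k (Nat.log b k) ≠ 0 := by
    have h1 : k / b ^ Nat.log b k < b := by
      rw [Nat.div_lt_iff_lt_mul (Nat.pow_pos hb.pos), ← pow_succ']
      exact Nat.lt_pow_succ_log_self hb.one_lt k
    have h2 : 0 < k / b ^ Nat.log b k :=
      Nat.div_pos (Nat.pow_log_le_self b hk0) (Nat.pow_pos hb.pos)
    rw [ndigit, Nat.mod_eq_of_lt h1]
    omega
  have hmem := (aux_mem b k _ hb).mpr hdig
  have hs : (nzPos b k).Pairwise (fun x y => y ≤ x) := by
    unfold nzPos
    rw [List.pairwise_reverse]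
    exact Finset.pairwise_sort _ _
  unfold dickWeight at hlog
  rcases hL : nzPos b k with _ | ⟨a, L⟩
  · simp [hL] at hmem
  · rw [hL] at hmem hs hlog
    simp only [List.take_succ_cons, List.take_zero, List.map_cons, List.map_nil, List.sum_cons,
      List.sum_nil, add_zero] at hlog
    rcases List.mem_cons.mp hmem with h | h
    · omega
    · have := (List.pairwise_cons.mp hs).1 _ h
      omega

lemma aux_split {s : ℕ} (c : Fin s → ℕ) (N : ℕ) (h : N ≤ ∑ j, c j) :
    ∃ d : Fin s → ℕ, (∀ j, d j ≤ c j) ∧ ∑ j, d j = N := by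
  induction N with
  | zero => exact ⟨0, by simp, by simp⟩
  | succ N ih =>
    obtain ⟨d, hd, hs⟩ := ih (by omega)
    obtain ⟨j, -, hj⟩ : ∃ j ∈ Finset.univ, d j < c j :=
      Finset.exists_lt_of_sum_lt (by omega)
    refine ⟨fun i => d i + if i = j then 1 else 0, ?_, ?_⟩
    · intro i
      by_cases hij : i = j
      · subst hij; simpa using hj
      · simpa [hij] using hd i
    · simp [Finset.sum_add_distrib, hs]

lemma aux_fibre (b : ℕ) (hb : b.Prime) (s n m : ℕ)
    (C : Fin s → Matrix (Fin n) (Fin m) (ZMod b)) (z : ℕ) (hz : minWeight b 1 C ≤ z)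
    (hpos : 1 ≤ minWeight b 1 C)
    (c : Fin s → ℕ) (hc : ∑ j, c j = z) (F : Finset (Fin s → ℕ))
    (hF : ∀ k ∈ F, k ∈ dualNet b C ∧ ∀ j, dickWeight b 1 (k j) = c j) :
    F.card ≤ b ^ (z - minWeight b 1 C + 1) := by
  obtain ⟨d, hd, hds⟩ := aux_split c (minWeight b 1 C - 1) (by omega)
  have hcard : (Fintype.piFinset fun j => Finset.range (b ^ (c j - d j))).card
      = b ^ (z - minWeight b 1 C + 1) := by
    rw [Fintype.card_piFinset]
    simp only [Finset.card_range]
    rw [Finset.prod_pow_eq_pow_sum]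
    congr 1
    have : ∑ j, (c j - d j) + ∑ j, d j = ∑ j, c j := by
      rw [← Finset.sum_add_distrib]
      exact Finset.sum_congr rfl fun j _ => Nat.sub_add_cancel (hd j)
    omega
  rw [← hcard]
  refine Finset.card_le_card_of_injOn (fun k j => k j / b ^ d j) ?_ ?_
  · intro k hk
    simp only [Finset.mem_coe, Fintype.mem_piFinset, Finset.mem_range]
    intro j
    rw [Nat.div_lt_iff_lt_mul (Nat.pow_pos hb.pos), ← pow_add, Nat.sub_add_cancel (hd j),
      ← (hF k hk).2 j]
    exact aux_lower b _ hb
  · intro k hk l hl hkl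
    have hkl' : ∀ j, k j / b ^ d j = l j / b ^ d j := fun j => congrFun hkl j
    choose r hr hdig hr0 using fun j => aux_diff b hb (d j) (k j) (l j) (hkl' j)
    have hdual : r ∈ dualNet b C := by
      have h1 := (hF k hk).1
      have h2 := (hF l hl).1
      simp only [dualNet, Set.mem_ofPred_eq] at h1 h2 ⊢
      have : ∀ j, digitVec b n (r j) = digitVec b n (k j) - digitVec b n (l j) := by
        intro j
        funext i
        simp [digitVec, hdig]
      simp only [this, Matrix.mulVec_sub, Finset.sum_sub_distrib, h1, h2, sub_zero]
    have hrz : r = 0 := by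
      by_contra hne
      have h1 : minWeight b 1 C ≤ dickWeightV b 1 r := Nat.sInf_le ⟨r, ⟨hdual, hne⟩, rfl⟩
      have h2 : dickWeightV b 1 r ≤ ∑ j, d j :=
        Finset.sum_le_sum fun j _ => aux_upper b _ _ hb (hr j)
      omega
    funext j
    exact hr0 j (by simp [hrz])

/-- Lemma 2.1(1): counting dual-net elements of given NRT weight. -/
theorem stmt_0 (b : ℕ) (hb : b.Prime) (s n m : ℕ)
    (C : Fin s → Matrix (Fin n) (Fin m) (ZMod b)) (z : ℕ) :
    (z < minWeight b 1 C →
      {k : Fin s → ℕ | k ∈ dualNet b C ∧ k ≠ 0 ∧ dickWeightV b 1 k = z}.ncard = 0) ∧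
    (minWeight b 1 C ≤ z →
      {k : Fin s → ℕ | k ∈ dualNet b C ∧ k ≠ 0 ∧ dickWeightV b 1 k = z}.Finite ∧
      ({k : Fin s → ℕ | k ∈ dualNet b C ∧ k ≠ 0 ∧ dickWeightV b 1 k = z}.ncard : ℝ)
        ≤ (b : ℝ) ^ (z - minWeight b 1 C + 1) * ((z : ℝ) + 1) ^ (s - 1)) := by
  constructor
  · intro hz
    convert Set.ncard_empty (Fin s → ℕ)
    ext k
    simp only [Set.mem_ofPred_eq, Set.mem_empty_iff_false, iff_false]
    rintro ⟨h1, h2, h3⟩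
    have : minWeight b 1 C ≤ dickWeightV b 1 k := Nat.sInf_le ⟨k, ⟨h1, h2⟩, rfl⟩
    omega
  · intro hz
    have hle : ∀ k : Fin s → ℕ, dickWeightV b 1 k = z → ∀ j, dickWeight b 1 (k j) ≤ z := by
      intro k hk j
      rw [← hk]
      exact Finset.single_le_sum (f := fun j => dickWeight b 1 (k j)) (fun _ _ => Nat.zero_le _)
        (Finset.mem_univ j)
    have hfin : {k : Fin s → ℕ | k ∈ dualNet b C ∧ k ≠ 0 ∧ dickWeightV b 1 k = z}.Finite := by
      refine (Fintype.piFinset fun _ : Fin s => Finset.range (b ^ z)).finite_toSet.subset ?_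
      rintro k ⟨-, -, h3⟩
      simp only [Finset.mem_coe, Fintype.mem_piFinset, Finset.mem_range]
      intro j
      exact lt_of_lt_of_le (aux_lower b (k j) hb) (Nat.pow_le_pow_right hb.pos (hle k h3 j))
    refine ⟨hfin, ?_⟩
    rw [Set.ncard_eq_toFinset_card _ hfin]
    cases s with
    | zero =>
      have : hfin.toFinset = ∅ := by
        ext k
        simp only [Set.Finite.mem_toFinset, Set.mem_ofPred_eq, Finset.notMem_empty, iff_false]
        exact fun h => h.2.1 (Subsingleton.elim _ _)
      rw [this]
      simp only [Finset.card_empty, Nat.cast_zero]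
      positivity
    | succ t =>
      have hmem : ∀ k, k ∈ hfin.toFinset ↔ k ∈ dualNet b C ∧ k ≠ 0 ∧ dickWeightV b 1 k = z := by
        intro k
        exact Set.Finite.mem_toFinset hfin
      set S := hfin.toFinset
      let f : (Fin (t + 1) → ℕ) → (Fin t → ℕ) := fun k i => dickWeight b 1 (k i.succ)
      have hfib : ∀ a ∈ S.image f, (S.filter fun x => f x = a).card
          ≤ b ^ (z - minWeight b 1 C + 1) := by
        intro a ha
        obtain ⟨k0, hk0, rfl⟩ := Finset.mem_image.mp ha
        obtain ⟨h1, h2, h3⟩ := (hmem k0).mp hk0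
        have hpos : 1 ≤ minWeight b 1 C := by
          obtain ⟨k, ⟨hk1, hk2⟩, hk3⟩ := Nat.sInf_mem
            (s := dickWeightV b 1 '' {k | k ∈ dualNet b C ∧ k ≠ 0}) ⟨_, k0, ⟨h1, h2⟩, rfl⟩
          change dickWeightV b 1 k = minWeight b 1 C at hk3
          rw [← hk3]
          by_contra h0
          apply hk2
          have h0' : ∑ j, dickWeight b 1 (k j) = 0 := by
            change ¬ 1 ≤ ∑ j, dickWeight b 1 (k j) at h0
            omega
          funext j
          have hj := Finset.sum_eq_zero_iff.mp h0' j (Finset.mem_univ j)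
          have := aux_lower b (k j) hb
          rw [hj] at this
          simpa using this
        refine aux_fibre b hb _ n m C z hz hpos (fun j => dickWeight b 1 (k0 j)) h3 _ ?_
        intro k hk
        obtain ⟨hkS, hkf⟩ := Finset.mem_filter.mp hk
        obtain ⟨g1, g2, g3⟩ := (hmem k).mp hkS
        refine ⟨g1, ?_⟩
        have hsucc : ∀ i : Fin t, dickWeight b 1 (k i.succ) = dickWeight b 1 (k0 i.succ) :=
          fun i => congrFun hkf i
        intro j
        refine Fin.cases ?_ hsucc j
        unfold dickWeightV at g3 h3
        rw [Fin.sum_univ_succ] at g3 h3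
        simp only [hsucc] at g3
        omega
      have hcard := Finset.card_le_mul_card_image S _ hfib
      have himg : (S.image f).card ≤ (z + 1) ^ t := by
        calc (S.image f).card
            ≤ (Fintype.piFinset fun _ : Fin t => Finset.range (z + 1)).card := by
              apply Finset.card_le_card
              intro a ha
              obtain ⟨k, hk, rfl⟩ := Finset.mem_image.mp ha
              simp only [Fintype.mem_piFinset, Finset.mem_range]
              intro i
              exact Nat.lt_succ_of_le (hle k ((hmem k).mp hk).2.2 i.succ)
          _ = (z + 1) ^ t := by simp
      have := hcard.trans (Nat.mul_le_mul_left _ himg)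
      simp only [Nat.add_sub_cancel]
      exact_mod_cast this
end

section
/- Let b be a prime and let P be a digital net over F_b with generating matrices C_1,...,C_s in F_b^{n x m}, with dual net P^perp. Then for every real lambda > 1, the series sum_{z=1}^infty b^{(1-lambda) z} z^{s-1} converges and sum_{k in P^perp \ {0}} b^{-lambda mu_1(k)} <= 2^{s-1} b^{lambda} (mu_1(P^perp))^{s-1} b^{-lambda mu_1(P^perp)} sum_{z=1}^infty b^{(1-lambda) z} z^{s-1}. -/
open MeasureTheory Finset Matrix

theorem dw_lt_iff (b : ℕ) (hb : 1 < b) (k c : ℕ) : dickWeight b 1 k ≤ c ↔ k < b ^ c := by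
  by_cases hk : k = 0
  · subst hk
    have : 0 < b ^ c := by positivity
    simp [dickWeight, nzPos, this]
  have hmem : ∀ i, i ∈ nzPos b k ↔ i < k ∧ ndigit b k i ≠ 0 := by
    intro i; simp [nzPos]
  have hlog : Nat.log b k ∈ nzPos b k := by
    rw [hmem]
    refine ⟨Nat.log_lt_self b hk, ?_⟩
    unfold ndigit
    have h1 : b ^ Nat.log b k ≤ k := Nat.pow_log_le_self b hk
    have h2 : k < b ^ (Nat.log b k + 1) := Nat.lt_pow_succ_log_self hb k
    rw [Nat.mod_eq_of_lt]
    · exact (Nat.div_pos h1 (by positivity)).ne'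
    · rw [Nat.div_lt_iff_lt_mul (by positivity)]
      rwa [pow_succ, mul_comm] at h2
  have hsort : (nzPos b k).Pairwise (fun a b => b ≤ a) := by
    unfold nzPos
    rw [List.pairwise_reverse]
    exact Finset.pairwise_sort _ _
  have key : dickWeight b 1 k = Nat.log b k + 1 := by
    unfold dickWeight
    cases h : nzPos b k with
    | nil => rw [h] at hlog; simp at hlog
    | cons x t =>
      rw [h] at hlog hsort
      have hx := (hmem x).1 (by rw [h]; simp)
      have hx2 : x ≤ Nat.log b k := by
        apply Nat.le_log_of_pow_le hb
        by_contra hlt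
        apply hx.2
        unfold ndigit
        rw [Nat.div_eq_of_lt (by omega)]
        simp
      have hx3 : Nat.log b k ≤ x := by
        rcases List.mem_cons.1 hlog with h | h
        · omega
        · exact List.rel_of_pairwise_cons hsort h
      simp
      omega
  rw [key, Nat.succ_le_iff, Nat.log_lt_iff_lt_pow hb hk]

theorem exists_sub_tuple {s : ℕ} (c : Fin s → ℕ) (D : ℕ) (hD : D ≤ ∑ j, c j) :
    ∃ e : Fin s → ℕ, (∀ j, e j ≤ c j) ∧ ∑ j, e j = D := by
  induction D with
  | zero => exact ⟨fun _ => 0, by simp, by simp⟩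
  | succ D ih =>
    obtain ⟨e, he, hs⟩ := ih (by omega)
    have : ∃ j ∈ Finset.univ, e j < c j := Finset.exists_lt_of_sum_lt (by omega)
    obtain ⟨j, -, hj⟩ := this
    refine ⟨fun i => e i + if i = j then 1 else 0, ?_, ?_⟩
    · intro i
      dsimp only
      split_ifs with h
      · subst h; omega
      · simpa using he i
    · rw [Finset.sum_add_distrib, hs]; simp

/-- Digitwise construction. -/
theorem exists_digits (b : ℕ) (hb : 1 < b) (f : ℕ → ℕ) (hf : ∀ i, f i < b) (e : ℕ) :
    ∃ k, k < b ^ e ∧ ∀ i, ndigit b k i = if i < e then f i else 0 := by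
  induction e generalizing f with
  | zero => exact ⟨0, by simp, by simp [ndigit]⟩
  | succ e ih =>
    obtain ⟨k, hk, hd⟩ := ih (fun i => f (i + 1)) (fun i => hf _)
    refine ⟨f 0 + b * k, ?_, ?_⟩
    · have := hf 0
      rw [pow_succ]
      nlinarith
    · intro i
      cases i with
      | zero => simp [ndigit, Nat.mod_eq_of_lt (hf 0)]
      | succ i =>
        have h := hd i
        unfold ndigit at h ⊢
        rw [pow_succ', ← Nat.div_div_eq_div_mul, Nat.add_mul_div_left _ _ (by omega),
          Nat.div_eq_of_lt (hf 0), zero_add, h]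
        simp

theorem eq_of_digits (b : ℕ) (hb : 1 < b) (k l : ℕ)
    (h : ∀ i, ndigit b k i = ndigit b l i) : k = l := by
  induction k using Nat.strong_induction_on generalizing l with
  | _ k ih =>
    have h0 : k % b = l % b := by simpa [ndigit] using h 0
    have hs : ∀ i, ndigit b (k / b) i = ndigit b (l / b) i := by
      intro i
      have := h (i + 1)
      simpa [ndigit, pow_succ', ← Nat.div_div_eq_div_mul] using this
    by_cases hk : k = 0
    · subst hk
      by_contra hl
      have h2 : b ^ Nat.log b l ≤ l := Nat.pow_log_le_self b (Ne.symm hl)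
      have h3 : l < b ^ (Nat.log b l + 1) := Nat.lt_pow_succ_log_self hb l
      have h1 := h (Nat.log b l)
      unfold ndigit at h1
      rw [Nat.mod_eq_of_lt (a := l / _), Nat.zero_div, Nat.zero_mod] at h1
      · exact absurd (Nat.div_pos h2 (by positivity)) (by omega)
      · rw [Nat.div_lt_iff_lt_mul (by positivity)]
        rwa [pow_succ, mul_comm] at h3
    · have h4 := ih (k / b) (Nat.div_lt_self (by omega) hb) (l / b) hs
      rw [← Nat.div_add_mod k b, ← Nat.div_add_mod l b, h0, h4]

theorem minWeight_le {b s n m : ℕ} (C : Fin s → Matrix (Fin n) (Fin m) (ZMod b))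
    (k : Fin s → ℕ) (hk : k ∈ dualNet b C) (h0 : k ≠ 0) :
    minWeight b 1 C ≤ dickWeightV b 1 k :=
  Nat.sInf_le ⟨k, ⟨hk, h0⟩, rfl⟩

theorem dual_inj {b s n m : ℕ} (hb : b.Prime) (C : Fin s → Matrix (Fin n) (Fin m) (ZMod b))
    (e : Fin s → ℕ) (he : ∑ j, e j < minWeight b 1 C) (k l : Fin s → ℕ)
    (hk : k ∈ dualNet b C) (hl : l ∈ dualNet b C)
    (h : ∀ j, k j / b ^ e j = l j / b ^ e j) : k = l := by
  have hb1 := hb.one_lt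
  have hex : ∀ j, ∃ q, q < b ^ e j ∧ ∀ i, ndigit b q i =
      if i < e j then (ndigit b (k j) i + (b - ndigit b (l j) i)) % b else 0 := fun j =>
    exists_digits b hb1 (fun i => (ndigit b (k j) i + (b - ndigit b (l j) i)) % b)
      (fun i => Nat.mod_lt _ (by omega)) (e j)
  choose q hq hqd using hex
  have hagree : ∀ j i, e j ≤ i → ndigit b (k j) i = ndigit b (l j) i := by
    intro j i hi
    unfold ndigit
    obtain ⟨r, rfl⟩ := Nat.exists_eq_add_of_le hi
    rw [pow_add, ← Nat.div_div_eq_div_mul, ← Nat.div_div_eq_div_mul, h j]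
  have hdl : ∀ j i, ndigit b (l j) i < b := fun j i => Nat.mod_lt _ (by omega)
  have hdk : ∀ j i, ndigit b (k j) i < b := fun j i => Nat.mod_lt _ (by omega)
  have hcast : ∀ j i, (ndigit b (q j) i : ZMod b) = ndigit b (k j) i - ndigit b (l j) i := by
    intro j i
    rw [hqd]
    split_ifs with hi
    · rw [ZMod.natCast_mod, Nat.cast_add, Nat.cast_sub (hdl j i).le]
      simp [sub_eq_add_neg]
    · rw [hagree j i (by omega)]; simp
  have hqdual : q ∈ dualNet b C := by
    unfold dualNet at hk hl ⊢
    simp only [Set.mem_ofPred_eq] at hk hl ⊢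
    have : ∀ j, digitVec b n (q j) = digitVec b n (k j) - digitVec b n (l j) := by
      intro j; ext i; exact hcast j i
    simp only [this, Matrix.mulVec_sub, Finset.sum_sub_distrib, hk, hl, sub_zero]
  have hq0 : q = 0 := by
    by_contra hne
    have h1 := minWeight_le C q hqdual hne
    have h2 : dickWeightV b 1 q ≤ ∑ j, e j :=
      Finset.sum_le_sum fun j _ => (dw_lt_iff b hb1 _ _).2 (hq j)
    omega
  funext j
  apply eq_of_digits b hb1
  intro i
  have h1 := hcast j i
  rw [hq0] at h1
  have h2 : ((ndigit b (k j) i : ℕ) : ZMod b) = ndigit b (l j) i := by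
    rw [← sub_eq_zero, ← h1]; simp [ndigit]
  rw [ZMod.natCast_eq_natCast_iff] at h2
  exact Nat.ModEq.eq_of_lt_of_lt h2 (hdk j i) (hdl j i)

theorem card_fixed {b s n m : ℕ} (hb : b.Prime) (C : Fin s → Matrix (Fin n) (Fin m) (ZMod b))
    (c : Fin s → ℕ) (w : ℕ) (hd : 0 < minWeight b 1 C) (hc : ∑ j, c j = minWeight b 1 C + w)
    (F : Finset (Fin s → ℕ)) (hF : ∀ k ∈ F, k ∈ dualNet b C)
    (hFc : ∀ k ∈ F, ∀ j, dickWeight b 1 (k j) = c j) : F.card ≤ b ^ (w + 1) := by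
  have hb1 := hb.one_lt
  obtain ⟨e, he, hes⟩ := exists_sub_tuple c (minWeight b 1 C - 1) (by omega)
  have hcard : (Fintype.piFinset fun j => Finset.range (b ^ (c j - e j))).card = b ^ (w + 1) := by
    rw [Fintype.card_piFinset]
    simp only [Finset.card_range]
    rw [Finset.prod_pow_eq_pow_sum]
    congr 1
    have : ∑ j, (c j - e j) + ∑ j, e j = ∑ j, c j := by
      rw [← Finset.sum_add_distrib]
      exact Finset.sum_congr rfl fun j _ => Nat.sub_add_cancel (he j)
    omega
  rw [← hcard]
  apply Finset.card_le_card_of_injOn (fun k j => k j / b ^ e j)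
  · intro k hk
    simp only [Finset.mem_coe, Fintype.mem_piFinset, Finset.mem_range]
    intro j
    rw [Nat.div_lt_iff_lt_mul (by positivity), ← pow_add, Nat.sub_add_cancel (he j)]
    exact (dw_lt_iff b hb1 _ _).1 (hFc k hk j).le
  · intro k hk l hl hkl
    exact dual_inj hb C e (by omega) k l (hF k hk) (hF l hl) fun j => congrFun hkl j

theorem card_tuples (t z : ℕ) (T : Finset (Fin (t + 1) → ℕ)) (hT : ∀ c ∈ T, ∑ j, c j = z) :
    T.card ≤ (z + 1) ^ t := by
  have hcard : (Fintype.piFinset fun _ : Fin t => Finset.range (z + 1)).card = (z + 1) ^ t := by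
    simp
  rw [← hcard]
  apply Finset.card_le_card_of_injOn (fun c j => c (Fin.succ j))
  · intro c hc
    simp only [Finset.mem_coe, Fintype.mem_piFinset, Finset.mem_range]
    intro j
    have h1 := hT c hc
    have := Finset.single_le_sum (f := c) (fun i _ => Nat.zero_le _) (Finset.mem_univ j.succ)
    omega
  · intro c hc c' hc' h
    have h1 := hT c hc
    have h2 := hT c' hc'
    rw [Fin.sum_univ_succ] at h1 h2
    have h3 : ∀ j : Fin t, c j.succ = c' j.succ := fun j => congrFun h j
    simp only [h3] at h1
    funext j
    refine Fin.cases ?_ h3 j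
    omega

theorem card_weight {b t n m : ℕ} (hb : b.Prime)
    (C : Fin (t + 1) → Matrix (Fin n) (Fin m) (ZMod b))
    (w : ℕ) (hd : 0 < minWeight b 1 C)
    (F : Finset (Fin (t + 1) → ℕ)) (hF : ∀ k ∈ F, k ∈ dualNet b C)
    (hFw : ∀ k ∈ F, dickWeightV b 1 k = minWeight b 1 C + w) :
    F.card ≤ b ^ (w + 1) * (minWeight b 1 C + w + 1) ^ t := by
  classical
  have h1 := Finset.card_le_mul_card_image (f := fun k j => dickWeight b 1 (k j)) F (b ^ (w + 1)) (by
    intro c hc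
    obtain ⟨k, hk, rfl⟩ := Finset.mem_image.1 hc
    apply card_fixed hb C (fun j => dickWeight b 1 (k j)) w hd (hFw k hk)
    · intro l hl; exact hF l (Finset.mem_filter.1 hl).1
    · intro l hl j; exact congrFun (Finset.mem_filter.1 hl).2 j)
  refine h1.trans (Nat.mul_le_mul_left _ (card_tuples t _ _ ?_))
  intro c hc
  obtain ⟨k, hk, rfl⟩ := Finset.mem_image.1 hc
  exact hFw k hk

theorem minWeight_pos {b t n m : ℕ} (hb : b.Prime)
    (C : Fin (t + 1) → Matrix (Fin n) (Fin m) (ZMod b)) : 0 < minWeight b 1 C := by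
  have hb1 := hb.one_lt
  have hne : (dickWeightV b 1 '' {k | k ∈ dualNet b C ∧ k ≠ 0}).Nonempty := by
    refine ⟨_, ⟨fun _ => b ^ n, ⟨?_, ?_⟩, rfl⟩⟩
    · have : digitVec b n (b ^ n) = 0 := by
        ext i
        simp only [digitVec, ndigit, Pi.zero_apply]
        rw [Nat.pow_div i.2.le (by omega)]
        have : b ∣ b ^ (n - i.val) := dvd_pow_self b (by omega)
        simp [Nat.mod_eq_zero_of_dvd this]
      simp [dualNet, this]
    · intro h
      have := congrFun h 0
      have h2 : 0 < b ^ n := by positivity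
      simp at this
      omega
  obtain ⟨k, ⟨-, hk0⟩, hkw⟩ := Nat.sInf_mem hne
  rw [show minWeight b 1 C = dickWeightV b 1 k from hkw.symm]
  by_contra hc
  apply hk0
  funext j
  have h0 : ∑ j, dickWeight b 1 (k j) = 0 := by
    have : dickWeightV b 1 k = 0 := by omega
    exact this
  have h1 := Finset.sum_eq_zero_iff.1 h0 j (Finset.mem_univ j)
  have h2 := (dw_lt_iff b hb1 (k j) 0).1 h1.le
  simpa using h2

theorem summ_aux (b : ℕ) (hb : b.Prime) (t : ℕ) (lam : ℝ) (hlam : 1 < lam) :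
    Summable (fun z : ℕ =>
      (b : ℝ) ^ ((1 - lam) * ((z : ℝ) + 1)) * ((z : ℝ) + 1) ^ t) := by
  have hb1 : (1 : ℝ) < b := by exact_mod_cast hb.one_lt
  have hr0 : 0 < (b : ℝ) ^ (1 - lam) := by positivity
  have hr1 : (b : ℝ) ^ (1 - lam) < 1 := Real.rpow_lt_one_of_one_lt_of_neg hb1 (by linarith)
  have h := summable_pow_mul_geometric_of_norm_lt_one (R := ℝ) t
    (r := (b : ℝ) ^ (1 - lam)) (by rw [Real.norm_of_nonneg hr0.le]; exact hr1)
  have h2 := (summable_nat_add_iff 1).2 h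
  refine h2.congr fun z => ?_
  rw [mul_comm, Real.rpow_mul (by positivity)]
  push_cast
  rw [← Real.rpow_natCast _ (z + 1)]
  push_cast
  rfl

/-- Lemma 2.1(2): weighted sum over the dual net, NRT weight. -/
theorem stmt_1 (b : ℕ) (hb : b.Prime) (s n m : ℕ)
    (C : Fin s → Matrix (Fin n) (Fin m) (ZMod b)) (lam : ℝ) (hlam : 1 < lam) :
    Summable (fun z : ℕ =>
      (b : ℝ) ^ ((1 - lam) * ((z : ℝ) + 1)) * ((z : ℝ) + 1) ^ (s - 1)) ∧
    Summable (fun k : {k : Fin s → ℕ // k ∈ dualNet b C ∧ k ≠ 0} =>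
      (b : ℝ) ^ (-(lam * (dickWeightV b 1 k.val : ℝ)))) ∧
    (∑' k : {k : Fin s → ℕ // k ∈ dualNet b C ∧ k ≠ 0},
        (b : ℝ) ^ (-(lam * (dickWeightV b 1 k.val : ℝ))))
      ≤ 2 ^ (s - 1) * (b : ℝ) ^ lam * (minWeight b 1 C : ℝ) ^ (s - 1)
          * (b : ℝ) ^ (-(lam * (minWeight b 1 C : ℝ)))
          * ∑' z : ℕ, (b : ℝ) ^ ((1 - lam) * ((z : ℝ) + 1)) * ((z : ℝ) + 1) ^ (s - 1) := by

  have hb1 : (1 : ℝ) < b := by exact_mod_cast hb.one_lt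
  have hb0 : (0 : ℝ) < b := by linarith
  have hS := summ_aux b hb (s - 1) lam hlam
  refine ⟨hS, ?_⟩
  rcases s with _ | t
  · have : IsEmpty {k : Fin 0 → ℕ // k ∈ dualNet b C ∧ k ≠ 0} :=
      ⟨fun k => k.2.2 (Subsingleton.elim _ _)⟩
    refine ⟨summable_empty, ?_⟩
    rw [tsum_empty]
    have : 0 ≤ ∑' z : ℕ, (b : ℝ) ^ ((1 - lam) * ((z : ℝ) + 1)) * ((z : ℝ) + 1) ^ (0 - 1) :=
      tsum_nonneg fun z => by positivity
    positivity
  simp only [Nat.add_sub_cancel] at hS ⊢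
  have hd := minWeight_pos hb C
  have hcw := fun w => card_weight hb C w hd
  have hmin := minWeight_le C
  generalize minWeight b 1 C = d at hd hcw hmin ⊢
  set g : ℕ → ℝ := fun z => (b : ℝ) ^ ((1 - lam) * ((z : ℝ) + 1)) * ((z : ℝ) + 1) ^ t with hg
  set A : ℝ := 2 ^ t * (b : ℝ) ^ lam * (d : ℝ) ^ t * (b : ℝ) ^ (-(lam * (d : ℝ))) with hA
  have hA0 : 0 ≤ A := by positivity
  have hbound : ∀ F : Finset {k : Fin (t + 1) → ℕ // k ∈ dualNet b C ∧ k ≠ 0},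
      ∑ k ∈ F, (b : ℝ) ^ (-(lam * (dickWeightV b 1 k.val : ℝ))) ≤ A * ∑' z, g z := by
    intro F
    classical
    set W : Finset ℕ := F.image fun k => dickWeightV b 1 k.val - d with hW
    have hmaps : ∀ k ∈ F, dickWeightV b 1 k.val - d ∈ W :=
      fun k hk => Finset.mem_image_of_mem _ hk
    rw [← Finset.sum_fiberwise_of_maps_to hmaps]
    have hterm : ∀ w ∈ W, ∑ k ∈ F with dickWeightV b 1 k.val - d = w,
        (b : ℝ) ^ (-(lam * (dickWeightV b 1 k.val : ℝ))) ≤ A * g w := by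
      intro w _
      have hw : ∀ k ∈ F.filter (fun k => dickWeightV b 1 k.val - d = w),
          dickWeightV b 1 k.val = d + w := by
        intro k hk
        have h1 := (Finset.mem_filter.1 hk).2
        have h2 := hmin k.val k.2.1 k.2.2
        omega
      have hcard : (F.filter (fun k => dickWeightV b 1 k.val - d = w)).card
          ≤ b ^ (w + 1) * (d + w + 1) ^ t := by
        rw [← Finset.card_map (Function.Embedding.subtype _)]
        apply hcw w
        · intro k hk
          obtain ⟨k, hk2, rfl⟩ := Finset.mem_map.1 hk
          exact k.2.1
        · intro k hk
          obtain ⟨k, hk2, rfl⟩ := Finset.mem_map.1 hk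
          exact hw k hk2
      rw [Finset.sum_congr rfl (g := fun _ => (b : ℝ) ^ (-(lam * ((d + w : ℕ) : ℝ))))
        (fun k hk => by rw [hw k hk]), Finset.sum_const, nsmul_eq_mul]
      have hcardR : ((F.filter (fun k => dickWeightV b 1 k.val - d = w)).card : ℝ)
          ≤ (b : ℝ) ^ ((w : ℝ) + 1) * (2 * d * (w + 1)) ^ t := by
        have h1 : ((F.filter (fun k => dickWeightV b 1 k.val - d = w)).card : ℝ)
          ≤ (b : ℝ) ^ (w + 1) * (d + w + 1) ^ t := by exact_mod_cast hcard
        refine h1.trans ?_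
        rw [← Real.rpow_natCast _ (w + 1)]
        push_cast
        have hd' : (1 : ℝ) ≤ d := by exact_mod_cast hd
        have hw0 : (0 : ℝ) ≤ w := Nat.cast_nonneg w
        gcongr
        nlinarith
      refine (mul_le_mul_of_nonneg_right hcardR (by positivity)).trans (le_of_eq ?_)
      have hpow : (b : ℝ) ^ ((w : ℝ) + 1) * (b : ℝ) ^ (-(lam * ((d + w : ℕ) : ℝ)))
          = (b : ℝ) ^ lam * (b : ℝ) ^ (-(lam * (d : ℝ))) * (b : ℝ) ^ ((1 - lam) * ((w : ℝ) + 1)) := by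
        rw [← Real.rpow_add hb0, ← Real.rpow_add hb0, ← Real.rpow_add hb0]
        congr 1
        push_cast
        ring
      rw [hA, hg, mul_pow, mul_pow]
      linear_combination (2 ^ t * (d : ℝ) ^ t * ((w : ℝ) + 1) ^ t) * hpow
    refine (Finset.sum_le_sum hterm).trans ?_
    rw [← Finset.mul_sum]
    exact mul_le_mul_of_nonneg_left (hS.sum_le_tsum W fun z _ => by positivity) hA0
  exact ⟨summable_of_sum_le (fun k => by positivity) hbound,
    Real.tsum_le_of_sum_le (fun k => by positivity) hbound⟩
end

section
/- Let b be a prime and let alpha, beta be positive integers with alpha <= beta. Then for every s in N and every k in N_0^s, mu_alpha(k)/alpha >= mu_beta(k)/beta. -/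
open MeasureTheory Finset Matrix

/-- Adding one more entry to a prefix sum. -/
theorem aux_take_succ (l : List ℕ) : ∀ n, (l.take (n + 1)).sum = (l.take n).sum + l.getD n 0 := by
  induction l with
  | nil => intro n; simp
  | cons x l ih =>
    intro n
    cases n with
    | zero => simp
    | succ n =>
      have h := ih n
      simp only [List.take_succ_cons, List.sum_cons, List.getD_cons_succ] at h ⊢
      omega

/-- In a decreasing list, an entry is at most the average of the preceding ones. -/
theorem aux_avg (l : List ℕ) (hl : l.Pairwise (fun a c => c ≤ a)) :
    ∀ n, n * l.getD n 0 ≤ (l.take n).sum := by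
  induction l with
  | nil => intro n; simp
  | cons x l ih =>
    intro n
    rw [List.pairwise_cons] at hl
    cases n with
    | zero => simp
    | succ n =>
      have h := ih hl.2 n
      have hx : l.getD n 0 ≤ x := by
        by_cases hn : n < l.length
        · rw [List.getD_eq_getElem _ _ hn]
          exact hl.1 _ (List.getElem_mem hn)
        · rw [List.getD_eq_default _ _ (by omega)]
          exact Nat.zero_le _
      simp only [List.take_succ_cons, List.sum_cons, List.getD_cons_succ]
      rw [Nat.add_mul]
      omega

theorem aux_list (l : List ℕ) (hl : l.Pairwise (fun a c => c ≤ a)) (α β : ℕ)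
    (hα : 0 < α) (h : α ≤ β) : α * (l.take β).sum ≤ β * (l.take α).sum := by
  induction β, h using Nat.le_induction with
  | base => exact le_rfl
  | succ n hn ih =>
    have h1 := aux_avg l hl n
    rw [aux_take_succ]
    have hn0 : 0 < n := by omega
    refine Nat.le_of_mul_le_mul_left ?_ hn0
    nlinarith [Nat.mul_le_mul_left α h1, Nat.mul_le_mul_left (n + 1) ih]

theorem aux_dick (b k α β : ℕ) (hα : 0 < α) (h : α ≤ β) :
    α * dickWeight b β k ≤ β * dickWeight b α k := by
  unfold dickWeight
  rw [List.map_take, List.map_take]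
  refine aux_list _ ?_ α β hα h
  rw [List.pairwise_map]
  unfold nzPos
  rw [List.pairwise_reverse]
  refine (Finset.pairwise_sort _ (· ≤ ·)).imp ?_
  intro a c hac
  exact Nat.succ_le_succ hac

/-- `μ_α(k)/α ≥ μ_β(k)/β` for `α ≤ β`. -/
theorem stmt_2 (b : ℕ) (hb : b.Prime) (α β : ℕ) (hα : 0 < α) (hβ : α ≤ β)
    (s : ℕ) (k : Fin s → ℕ) :
    (dickWeightV b β k : ℝ) / (β : ℝ) ≤ (dickWeightV b α k : ℝ) / (α : ℝ) := by
  have hα' : (0 : ℝ) < α := by exact_mod_cast hα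
  have hβ' : (0 : ℝ) < β := by exact_mod_cast lt_of_lt_of_le hα hβ
  rw [div_le_div_iff₀ hβ' hα']
  have key : dickWeightV b β k * α ≤ dickWeightV b α k * β := by
    unfold dickWeightV
    rw [Finset.sum_mul, Finset.sum_mul]
    refine Finset.sum_le_sum fun j _ => ?_
    have := aux_dick b (k j) α β hα hβ
    rw [mul_comm _ α, mul_comm _ β]
    exact this
  exact_mod_cast key
end

section
/- Let b be a prime, let beta >= 2 be an integer, and let P be an order beta digital (t_beta, m, s)-net over F_b, i.e., a digital net over F_b with n x m generating matrices such that t_beta = beta*m - mu_beta(P^perp) + 1. Then for every integer 1 <= alpha < beta, P is an order alpha digital (t_alpha, m, s)-net over F_b with t_alpha = alpha*m - mu_alpha(P^perp) + 1 <= ceil(t_beta * alpha / beta). -/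
open MeasureTheory Finset Matrix

theorem aux_take_bound (a : ℕ) (l : List ℕ) (h : ∀ x ∈ l, x ≤ a) (p d : ℕ) :
    (l.take (p + d)).sum ≤ (l.take p).sum + d * a := by
  rw [List.take_add, List.sum_append]
  have h1 : ((l.drop p).take d).sum ≤ ((l.drop p).take d).length • a :=
    List.sum_le_card_nsmul _ _ fun x hx => h x (List.mem_of_mem_drop (List.mem_of_mem_take hx))
  have h2 : ((l.drop p).take d).length ≤ d := List.length_take_le _ _
  have h3 := Nat.mul_le_mul_right a h2
  rw [smul_eq_mul] at h1
  omega

theorem aux_take_ratio (l : List ℕ) (hl : l.Pairwise (· ≥ ·)) (p d : ℕ) :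
    p * (l.take (p + d)).sum ≤ (p + d) * (l.take p).sum := by
  induction l generalizing p with
  | nil => simp
  | cons a l ih =>
    rw [List.pairwise_cons] at hl
    cases p with
    | zero => simp
    | succ p =>
      have h1 := ih hl.2 p
      have h2 := aux_take_bound a l hl.1 p d
      rw [show p + 1 + d = (p + d) + 1 by ring]
      simp only [List.take_succ_cons, List.sum_cons]
      nlinarith

theorem aux_dickWeight (b α β k : ℕ) (h : α ≤ β) :
    α * dickWeight b β k ≤ β * dickWeight b α k := by
  obtain ⟨d, rfl⟩ := Nat.exists_eq_add_of_le h
  unfold dickWeight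
  rw [List.map_take, List.map_take]
  apply aux_take_ratio
  rw [List.pairwise_map]
  unfold nzPos
  rw [List.pairwise_reverse]
  refine (Finset.pairwise_sort _ (· ≤ ·)).imp ?_
  intro x y hxy
  simpa using hxy

theorem aux_minWeight {s n m : ℕ} (b α β : ℕ) (C : Fin s → Matrix (Fin n) (Fin m) (ZMod b))
    (h : α ≤ β) : α * minWeight b β C ≤ β * minWeight b α C := by
  unfold minWeight
  rcases Set.eq_empty_or_nonempty {k | k ∈ dualNet b C ∧ k ≠ 0} with he | hne
  · rw [he]; simp
  · obtain ⟨k, hk, hk2⟩ := Nat.sInf_mem (hne.image (dickWeightV b α))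
    rw [← hk2]
    calc _ ≤ α * dickWeightV b β k :=
          Nat.mul_le_mul_left _ (Nat.sInf_le (Set.mem_image_of_mem _ hk))
      _ ≤ _ := by
          unfold dickWeightV
          rw [Finset.mul_sum, Finset.mul_sum]
          exact Finset.sum_le_sum fun j _ => aux_dickWeight b α β (k j) h

/-- Lemma 3.1 (propagation rule): an order `β` digital `(t_β,m,s)`-net is an order `α`
digital `(t_α,m,s)`-net with `t_α ≤ ⌈t_β α / β⌉`, for `1 ≤ α < β`. -/
theorem stmt_3 (b : ℕ) (hb : b.Prime) (s n m β : ℕ) (hβ : 2 ≤ β)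
    (C : Fin s → Matrix (Fin n) (Fin m) (ZMod b)) (tβ : ℕ)
    (htβ : (tβ : ℤ) = β * m - minWeight b β C + 1)
    (α : ℕ) (hα1 : 1 ≤ α) (hαβ : α < β) :
    (α * m : ℤ) - minWeight b α C + 1 ≤ ⌈((tβ * α : ℕ) : ℚ) / (β : ℚ)⌉ := by
  have h := aux_minWeight b α β C hαβ.le
  have hz : (α : ℤ) * minWeight b β C ≤ β * minWeight b α C := by exact_mod_cast h
  have hβ0 : (0 : ℚ) < β := by exact_mod_cast (by omega : 0 < β)
  have hc := Int.le_ceil (((tβ * α : ℕ) : ℚ) / (β : ℚ))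
  rw [div_le_iff₀ hβ0] at hc
  generalize ⌈((tβ * α : ℕ) : ℚ) / (β : ℚ)⌉ = c at hc ⊢
  have hc' : (tβ : ℤ) * α ≤ c * β := by exact_mod_cast hc
  by_contra hlt
  have hlt' : c + 1 ≤ (α * m : ℤ) - minWeight b α C + 1 := by omega
  have hα' : (1 : ℤ) ≤ α := by exact_mod_cast hα1
  have hβ' : (0 : ℤ) ≤ β := by positivity
  rw [htβ] at hc'
  nlinarith [mul_le_mul_of_nonneg_right hlt' hβ']
end

section
/- Let b be a prime, let alpha >= 2 be an integer, and let P be a digital net over F_b with generating matrices C_1,...,C_s in F_b^{n x m}, with dual net P^perp. Then for every z in N_0, the number of k in P^perp \ {0} with mu_alpha(k) = z equals 0 if z < mu_alpha(P^perp), and is at most (b-1)^{s*alpha} b^{(z - mu_alpha(P^perp))/alpha} (z+2)^{s*alpha - 1} if z >= mu_alpha(P^perp). -/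
open MeasureTheory Finset Matrix

section helpers

theorem aux_list_take_sum (L : List ℕ) : ∀ a : ℕ,
    (L.take a).sum = ∑ i ∈ Finset.range a, L.getD i 0 := by
  induction L with
  | nil => intro a; simp
  | cons x L ih =>
    intro a
    cases a with
    | zero => simp
    | succ a => rw [Finset.sum_range_succ']; simp [ih a, add_comm]

/-- the shifted positions `c_{i+1}` of the nonzero digits, padded by `0` -/
def cpos (b k i : ℕ) : ℕ := ((nzPos b k).map (· + 1)).getD i 0

/-- the corresponding digits, padded by `1` -/
def kdig (b k i : ℕ) : ℕ := if cpos b k i = 0 then 1 else ndigit b k (cpos b k i - 1)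

theorem aux_dick_s4 (b α k : ℕ) : dickWeight b α k = ∑ i ∈ Finset.range α, cpos b k i := by
  unfold dickWeight cpos
  rw [List.map_take, aux_list_take_sum]

theorem aux_mem_nzPos {b : ℕ} (hb : 2 ≤ b) (k p : ℕ) : p ∈ nzPos b k ↔ ndigit b k p ≠ 0 := by
  unfold nzPos
  simp only [List.mem_reverse, Finset.mem_sort, Finset.mem_filter, Finset.mem_range,
    and_iff_right_iff_imp]
  intro h
  by_contra hk
  push Not at hk
  apply h
  unfold ndigit
  rw [Nat.div_eq_of_lt (lt_of_le_of_lt hk (Nat.lt_pow_self hb)), Nat.zero_mod]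

theorem aux_sorted (b k : ℕ) : (nzPos b k).Pairwise (· > ·) := by
  unfold nzPos
  rw [List.pairwise_reverse]
  exact (Finset.sortedLT_sort _).pairwise

theorem aux_cpos_lt {b k i : ℕ} (h : i < (nzPos b k).length) :
    cpos b k i = (nzPos b k)[i] + 1 := by
  unfold cpos
  rw [List.getD_eq_getElem _ _ (by simpa using h)]
  simp

theorem aux_cpos_ge {b k i : ℕ} (h : (nzPos b k).length ≤ i) : cpos b k i = 0 := by
  unfold cpos
  rw [List.getD_eq_default _ _ (by simpa using h)]

theorem aux_cpos_strict {b k i j : ℕ} (hij : i < j) (h : 0 < cpos b k i) :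
    cpos b k j < cpos b k i := by
  by_cases hj : j < (nzPos b k).length
  · rw [aux_cpos_lt hj, aux_cpos_lt (hij.trans hj)]
    have := List.pairwise_iff_getElem.1 (aux_sorted b k) i j (hij.trans hj) hj hij
    omega
  · rw [aux_cpos_ge (not_lt.1 hj)]; exact h

theorem aux_cpos_anti {b k i j : ℕ} (hij : i ≤ j) : cpos b k j ≤ cpos b k i := by
  rcases hij.eq_or_lt with rfl | hij
  · rfl
  by_cases h : i < (nzPos b k).length
  · exact (aux_cpos_strict hij (by rw [aux_cpos_lt h]; omega)).le
  · rw [aux_cpos_ge (i := j) (by omega)]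
    exact Nat.zero_le _

theorem aux_exists_idx {b : ℕ} (hb : 2 ≤ b) {k p : ℕ} (h : ndigit b k p ≠ 0) :
    ∃ i, cpos b k i = p + 1 := by
  obtain ⟨i, hi, rfl⟩ := List.mem_iff_getElem.1 ((aux_mem_nzPos hb k p).2 h)
  exact ⟨i, aux_cpos_lt hi⟩

theorem aux_digit_cpos {b : ℕ} (hb : 2 ≤ b) {k i : ℕ} (h : cpos b k i ≠ 0) :
    ndigit b k (cpos b k i - 1) ≠ 0 := by
  by_cases hi : i < (nzPos b k).length
  · rw [aux_cpos_lt hi]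
    exact (aux_mem_nzPos hb k _).1 (List.getElem_mem _)
  · exact absurd (aux_cpos_ge (not_lt.1 hi)) h

theorem aux_kdig_mem {b : ℕ} (hb : 2 ≤ b) (k i : ℕ) : kdig b k i ∈ Finset.Icc 1 (b - 1) := by
  unfold kdig
  rw [Finset.mem_Icc]
  split_ifs with h
  · omega
  · have h1 := aux_digit_cpos hb h
    have h2 : ndigit b k (cpos b k i - 1) < b := Nat.mod_lt _ (by omega)
    omega

/-- the number of free low digits -/
def tlow (b α k : ℕ) : ℕ := cpos b k (α - 1) - 1

theorem aux_top_half {b α : ℕ} (hb : 2 ≤ b) (hα : 1 ≤ α) {k k' : ℕ}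
    (hc : ∀ i < α, cpos b k i = cpos b k' i) (hd : ∀ i < α, kdig b k i = kdig b k' i)
    {p : ℕ} (hp : tlow b α k ≤ p) (h : ndigit b k p ≠ 0) : ndigit b k p = ndigit b k' p := by
  obtain ⟨i, hi⟩ := aux_exists_idx hb h
  by_cases hia : i < α
  · have h1 := hd i hia
    have h2 := hc i hia
    unfold kdig at h1
    rw [← h2, hi] at h1
    simpa using h1
  · exfalso
    have h3 : cpos b k i ≤ cpos b k (α - 1) := aux_cpos_anti (by omega)
    have := aux_cpos_strict (b := b) (k := k) (i := α - 1) (j := i) (by omega) (by omega)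
    unfold tlow at hp
    omega

theorem aux_top {b α : ℕ} (hb : 2 ≤ b) (hα : 1 ≤ α) {k k' : ℕ}
    (hc : ∀ i < α, cpos b k i = cpos b k' i) (hd : ∀ i < α, kdig b k i = kdig b k' i)
    {p : ℕ} (hp : tlow b α k ≤ p) : ndigit b k p = ndigit b k' p := by
  by_cases h : ndigit b k p = 0
  · by_cases h' : ndigit b k' p = 0
    · rw [h, h']
    · have ht : tlow b α k' = tlow b α k := by
        unfold tlow; rw [hc _ (by omega)]
      exact (aux_top_half hb hα (fun i hi => (hc i hi).symm) (fun i hi => (hd i hi).symm)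
        (by rw [ht]; exact hp) h').symm
  · exact aux_top_half hb hα hc hd hp h

theorem aux_weight_low (b α k : ℕ) (hα : 1 ≤ α) : α * cpos b k (α - 1) ≤ dickWeight b α k := by
  rw [aux_dick_s4]
  have := Finset.card_nsmul_le_sum (Finset.range α) (fun i => cpos b k i) (cpos b k (α - 1))
    (fun i hi => aux_cpos_anti (by rw [Finset.mem_range] at hi; omega))
  simpa using this

theorem aux_ndigit_zero {b l t p : ℕ} (hb : 2 ≤ b) (hl : l < b ^ t) (hp : t ≤ p) :
    ndigit b l p = 0 := by
  unfold ndigit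
  rw [Nat.div_eq_of_lt (lt_of_lt_of_le hl (Nat.pow_le_pow_right (by omega) hp)), Nat.zero_mod]

theorem aux_weight_up {b α l t : ℕ} (hb : 2 ≤ b) (hl : l < b ^ t) :
    dickWeight b α l ≤ α * t := by
  rw [aux_dick_s4]
  have := Finset.sum_le_card_nsmul (Finset.range α) (fun i => cpos b l i) t (by
    intro i _
    by_contra hcon
    push Not at hcon
    exact aux_digit_cpos hb (k := l) (i := i) (by omega)
      (aux_ndigit_zero hb hl (by omega)))
  simpa using this

theorem aux_ext {b : ℕ} (hb : 2 ≤ b) : ∀ k k' : ℕ, (∀ p, ndigit b k p = ndigit b k' p) → k = k' := by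
  intro k
  induction k using Nat.strong_induction_on with
  | _ k ih =>
    intro k' h
    have h0 := h 0
    simp only [ndigit, pow_zero, Nat.div_one] at h0
    have hs : ∀ p, ndigit b (k / b) p = ndigit b (k' / b) p := by
      intro p
      have := h (p + 1)
      simp only [ndigit, pow_succ'] at this ⊢
      rwa [Nat.div_div_eq_div_mul, Nat.div_div_eq_div_mul]
    rcases Nat.eq_zero_or_pos k with rfl | hk
    · by_contra hne
      have hz : ∀ p, ndigit b k' p = 0 := by
        intro p; rw [← h p]; simp [ndigit]
      have hlog := hz (Nat.log b k')
      unfold ndigit at hlog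
      have h1 : b ^ Nat.log b k' ≤ k' := Nat.pow_log_le_self b (by omega)
      have h2 : k' < b ^ (Nat.log b k' + 1) := Nat.lt_pow_succ_log_self (by omega) _
      have h3 : k' / b ^ Nat.log b k' < b := by
        rw [Nat.div_lt_iff_lt_mul (by positivity)]
        rw [pow_succ'] at h2; exact h2
      rw [Nat.mod_eq_of_lt h3] at hlog
      have := Nat.div_pos h1 (by positivity)
      omega
    · have := ih (k / b) (Nat.div_lt_self hk (by omega)) (k' / b) hs
      rw [← Nat.div_add_mod k b, ← Nat.div_add_mod k' b, h0, this]

theorem aux_ndigit_div (b k t p : ℕ) : ndigit b (k / b ^ t) p = ndigit b k (t + p) := by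
  unfold ndigit
  rw [Nat.div_div_eq_div_mul, pow_add]

theorem aux_lt_of_weight {b α k z : ℕ} (hb : 2 ≤ b) (hα : 1 ≤ α) (h : dickWeight b α k ≤ z) :
    k < b ^ z := by
  have : k / b ^ z = 0 := by
    apply aux_ext hb
    intro p
    rw [aux_ndigit_div]
    have h0 : ndigit b 0 p = 0 := by simp [ndigit]
    rw [h0]
    by_contra hne
    obtain ⟨i, hi⟩ := aux_exists_idx hb hne
    have h1 : cpos b k i ≤ cpos b k 0 := aux_cpos_anti (Nat.zero_le _)
    have h2 : cpos b k 0 ≤ dickWeight b α k := by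
      rw [aux_dick_s4]
      exact Finset.single_le_sum (f := fun i => cpos b k i) (fun _ _ => Nat.zero_le _)
        (Finset.mem_range.2 (by omega))
    omega
  rw [Nat.div_eq_zero_iff] at this
  rcases this with h | h
  · have : 0 < b ^ z := by positivity
    omega
  · exact h

theorem aux_build {b : ℕ} (hb : 2 ≤ b) : ∀ (t : ℕ) (a : ℕ → ℕ), (∀ i, a i < b) →
    ∃ l < b ^ t, ∀ p < t, ndigit b l p = a p := by
  intro t
  induction t with
  | zero => intro a _; exact ⟨0, by simp, by simp⟩
  | succ t ih =>
    intro a ha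
    obtain ⟨l, hl, hd⟩ := ih (fun i => a (i + 1)) (fun i => ha _)
    refine ⟨a 0 + b * l, ?_, ?_⟩
    · have := ha 0
      rw [pow_succ']
      nlinarith
    · intro p hp
      cases p with
      | zero => simp [ndigit, Nat.mod_eq_of_lt (ha 0)]
      | succ p =>
        rw [← hd p (by omega)]
        unfold ndigit
        rw [pow_succ', ← Nat.div_div_eq_div_mul, Nat.add_mul_div_left _ _ (by omega),
          Nat.div_eq_of_lt (ha 0), zero_add]

/-- difference of two dual net elements agreeing above the positions `t` -/
theorem aux_diff_s4 {b : ℕ} (hb : b.Prime) {s n m : ℕ} (α : ℕ)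
    (C : Fin s → Matrix (Fin n) (Fin m) (ZMod b)) {k k' : Fin s → ℕ}
    (hk : k ∈ dualNet b C) (hk' : k' ∈ dualNet b C) (hne : k ≠ k') (t : Fin s → ℕ)
    (h : ∀ j p, t j ≤ p → ndigit b (k j) p = ndigit b (k' j) p) :
    minWeight b α C ≤ α * ∑ j, t j := by
  have hb2 := hb.two_le
  have : NeZero b := ⟨hb.ne_zero⟩
  have hbuild : ∀ j, ∃ l < b ^ t j, ∀ p < t j, ndigit b l p =
      ((ndigit b (k j) p : ZMod b) - (ndigit b (k' j) p : ZMod b)).val :=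
    fun j => aux_build hb2 (t j) _ (fun i => ZMod.val_lt _)
  choose l hl hd using hbuild
  have hcast : ∀ j p, (ndigit b (l j) p : ZMod b) =
      (ndigit b (k j) p : ZMod b) - (ndigit b (k' j) p : ZMod b) := by
    intro j p
    by_cases hp : p < t j
    · rw [hd j p hp, ZMod.natCast_zmod_val]
    · rw [aux_ndigit_zero hb2 (hl j) (not_lt.1 hp), h j p (not_lt.1 hp)]; simp
  have hmem : l ∈ dualNet b C := by
    have hv : ∀ j, digitVec b n (l j) = digitVec b n (k j) - digitVec b n (k' j) := by
      intro j; funext i; simp [digitVec, hcast]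
    simp only [dualNet, Set.mem_ofPred_eq] at hk hk' ⊢
    simp only [hv, Matrix.mulVec_sub, Finset.sum_sub_distrib, hk, hk', sub_zero]
  have hl0 : l ≠ 0 := by
    intro h0
    apply hne
    funext j
    apply aux_ext hb2
    intro p
    have h1 := hcast j p
    have h2 : ndigit b (l j) p = 0 := by rw [h0]; simp [ndigit]
    rw [h2, Nat.cast_zero, eq_comm, sub_eq_zero, ZMod.natCast_eq_natCast_iff'] at h1
    simpa [ndigit] using h1
  calc minWeight b α C ≤ dickWeightV b α l := Nat.sInf_le ⟨l, ⟨hmem, hl0⟩, rfl⟩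
    _ ≤ ∑ j, α * t j := Finset.sum_le_sum fun j _ => aux_weight_up hb2 (hl j)
    _ = _ := by rw [Finset.mul_sum]

theorem aux_reduce {s : ℕ} (t : Fin s → ℕ) : ∀ e, e ≤ ∑ j, t j →
    ∃ t' : Fin s → ℕ, (∀ j, t' j ≤ t j) ∧ ∑ j, t' j + e = ∑ j, t j := by
  intro e
  induction e with
  | zero => intro _; exact ⟨t, fun _ => le_rfl, rfl⟩
  | succ e ih =>
    intro he
    obtain ⟨t', h1, h2⟩ := ih (by omega)
    have : ∃ j, t' j ≠ 0 := by
      by_contra hcon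
      push Not at hcon
      have : ∑ j, t' j = 0 := Finset.sum_eq_zero fun j _ => hcon j
      omega
    obtain ⟨j, hj⟩ := this
    refine ⟨Function.update t' j (t' j - 1), ?_, ?_⟩
    · intro i
      by_cases hij : i = j
      · subst hij; have := h1 i; simp; omega
      · simp [hij, h1 i]
    · rw [Finset.sum_update_of_mem (Finset.mem_univ j)]
      rw [← Finset.add_sum_erase _ _ (Finset.mem_univ j)] at h2
      rw [Finset.sdiff_singleton_eq_erase]
      omega

theorem aux_fiber {b : ℕ} (hb : b.Prime) {s n m : ℕ} {α : ℕ} (hα : 1 ≤ α)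
    (C : Fin s → Matrix (Fin n) (Fin m) (ZMod b)) {z : ℕ} (hz : minWeight b α C ≤ z)
    (F : Finset (Fin s → ℕ)) (hF : ∀ k ∈ F, k ∈ dualNet b C ∧ dickWeightV b α k = z)
    (hcode : ∀ k ∈ F, ∀ k' ∈ F, ∀ j, ∀ i < α, cpos b (k j) i = cpos b (k' j) i ∧
      kdig b (k j) i = kdig b (k' j) i) :
    F.card ≤ b ^ ((z - minWeight b α C) / α) := by
  have hb2 := hb.two_le
  rcases F.eq_empty_or_nonempty with rfl | ⟨k0, hk0⟩
  · simp
  set e := (z - minWeight b α C) / α with he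
  set t : Fin s → ℕ := fun j => tlow b α (k0 j) with ht
  have htop : ∀ k ∈ F, ∀ j p, t j ≤ p → ndigit b (k0 j) p = ndigit b (k j) p := by
    intro k hk j p hp
    exact aux_top hb2 hα (fun i hi => (hcode k0 hk0 k hk j i hi).1)
      (fun i hi => (hcode k0 hk0 k hk j i hi).2) hp
  have hpig : ∀ e', e' ≤ ∑ j, t j → b ^ e' < F.card →
      minWeight b α C + α * e' ≤ α * ∑ j, t j := by
    intro e' he' hcard
    obtain ⟨t', h1, h2⟩ := aux_reduce t e' he'
    have hcardpi : (Fintype.piFinset fun j => Finset.range (b ^ (t j - t' j))).card = b ^ e' := by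
      rw [Fintype.card_piFinset]
      simp only [Finset.card_range]
      rw [Finset.prod_pow_eq_pow_sum]
      congr 1
      have : ∑ j, (t j - t' j) + ∑ j, t' j = ∑ j, t j := by
        rw [← Finset.sum_add_distrib]
        exact Finset.sum_congr rfl fun j _ => Nat.sub_add_cancel (h1 j)
      omega
    obtain ⟨k, hk, k', hk', hne, heq⟩ := Finset.exists_ne_map_eq_of_card_lt_of_maps_to
      (s := F) (t := Fintype.piFinset fun j => Finset.range (b ^ (t j - t' j)))
      (f := fun k j => (k j / b ^ t' j) % b ^ (t j - t' j))
      (by rw [hcardpi]; exact hcard)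
      (by
        intro k _
        simp only [Finset.mem_coe, Fintype.mem_piFinset, Finset.mem_range]
        intro j
        exact Nat.mod_lt _ (by positivity))
    have hagree : ∀ j p, t' j ≤ p → ndigit b (k j) p = ndigit b (k' j) p := by
      intro j p hp
      by_cases hpt : t j ≤ p
      · rw [← htop k hk j p hpt, ← htop k' hk' j p hpt]
      · have h3 := congrFun heq j
        obtain ⟨q, rfl⟩ := Nat.exists_eq_add_of_le hp
        rw [← aux_ndigit_div, ← aux_ndigit_div]
        have key : ∀ x, ndigit b x q = ndigit b (x % b ^ (t j - t' j)) q := by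
          intro x
          obtain ⟨r, hr⟩ := Nat.exists_eq_add_of_lt (show q < t j - t' j by omega)
          unfold ndigit
          rw [hr, show q + r + 1 = q + (r + 1) by ring, pow_add, Nat.mod_mul_right_div_self,
            Nat.mod_mod_of_dvd _ (dvd_pow_self b (by omega))]
        rw [key, h3, ← key]
    have := aux_diff_s4 hb α C (hF k hk).1 (hF k' hk').1 hne t' hagree
    rw [← h2, mul_add]
    omega
  by_contra hcon
  push Not at hcon
  have heT : e < ∑ j, t j := by
    by_contra hT
    push Not at hT
    have h1 : b ^ (∑ j, t j) < F.card :=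
      lt_of_le_of_lt (Nat.pow_le_pow_right (by omega) hT) hcon
    -- agree everywhere forces at most b^T elements
    have hcardpi : (Fintype.piFinset fun j => Finset.range (b ^ t j)).card = b ^ ∑ j, t j := by
      rw [Fintype.card_piFinset]
      simp only [Finset.card_range]
      rw [Finset.prod_pow_eq_pow_sum]
    obtain ⟨k, hk, k', hk', hne, heq⟩ := Finset.exists_ne_map_eq_of_card_lt_of_maps_to
      (s := F) (t := Fintype.piFinset fun j => Finset.range (b ^ t j))
      (f := fun k j => k j % b ^ t j)
      (by rw [hcardpi]; exact h1)
      (by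
        intro k _
        simp only [Finset.mem_coe, Fintype.mem_piFinset, Finset.mem_range]
        intro j
        exact Nat.mod_lt _ (by positivity))
    apply hne
    funext j
    have h3 := congrFun heq j
    have h4 : k j / b ^ t j = k' j / b ^ t j := by
      apply aux_ext hb2
      intro p
      rw [aux_ndigit_div, aux_ndigit_div, ← htop k hk j _ (by omega), ← htop k' hk' j _ (by omega)]
    rw [← Nat.div_add_mod (k j) (b ^ t j), h3, h4, Nat.div_add_mod]
  have hp := hpig e heT.le hcon
  -- weight lower bound
  have hw : α * (∑ j, t j + 1) ≤ z := by
    rw [← (hF k0 hk0).2]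
    have h5 : ∑ j, t j + 1 ≤ ∑ j, cpos b (k0 j) (α - 1) := by
      have : ∑ j, t j < ∑ j, cpos b (k0 j) (α - 1) := by
        apply Finset.sum_lt_sum
        · intro j _; simp only [ht, tlow]; omega
        · have : ∃ j, t j ≠ 0 := by
            by_contra hc
            push Not at hc
            have h0 : ∑ j, t j = 0 := Finset.sum_eq_zero fun j _ => hc j
            rw [h0] at heT
            exact Nat.not_lt_zero _ heT
          obtain ⟨j, hj⟩ := this
          refine ⟨j, Finset.mem_univ _, ?_⟩
          simp only [ht, tlow] at hj ⊢
          omega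
      omega
    calc α * (∑ j, t j + 1) ≤ α * ∑ j, cpos b (k0 j) (α - 1) := Nat.mul_le_mul_left _ h5
      _ = ∑ j, α * cpos b (k0 j) (α - 1) := Finset.mul_sum _ _ _
      _ ≤ _ := Finset.sum_le_sum fun j _ => aux_weight_low b α (k0 j) hα
  have hdm : z - minWeight b α C < α * (e + 1) := by
    rw [he]
    exact Nat.lt_mul_div_succ _ (by omega)
  rw [mul_add] at hw hdm
  omega

theorem aux_card_antidiag {ι : Type} [Fintype ι] [DecidableEq ι] [Nonempty ι] (z : ℕ) :
    ((Finset.univ : Finset ι).piAntidiag z).card ≤ (z + 1) ^ (Fintype.card ι - 1) := by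
  obtain ⟨x0⟩ := ‹Nonempty ι›
  have hc : (Fintype.piFinset fun _ : {x : ι // x ≠ x0} => Finset.range (z + 1)).card
      = (z + 1) ^ (Fintype.card ι - 1) := by
    rw [Fintype.card_piFinset]
    simp [Fintype.card_subtype_compl]
  rw [← hc]
  apply Finset.card_le_card_of_injOn (fun c x => c x.1)
  · intro c hcm
    simp only [Finset.mem_coe, Finset.mem_piAntidiag] at hcm
    simp only [Finset.mem_coe, Fintype.mem_piFinset, Finset.mem_range]
    intro x
    have := Finset.single_le_sum (f := c) (fun _ _ => Nat.zero_le _) (Finset.mem_univ x.1)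
    exact Nat.lt_succ_of_le (this.trans hcm.1.le)
  · intro c hcm c' hcm' heq
    simp only [Finset.mem_coe, Finset.mem_piAntidiag] at hcm hcm'
    have hx : ∀ x, x ≠ x0 → c x = c' x := fun x hx => congrFun heq ⟨x, hx⟩
    funext x
    by_cases h : x = x0
    · subst h
      have h1 := hcm.1
      have h2 := hcm'.1
      rw [← Finset.add_sum_erase _ _ (Finset.mem_univ x)] at h1 h2
      have h3 : ∑ y ∈ Finset.univ.erase x, c y = ∑ y ∈ Finset.univ.erase x, c' y :=
        Finset.sum_congr rfl fun y hy => hx y (Finset.ne_of_mem_erase hy)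
      omega
    · exact hx x h

theorem aux_main {b : ℕ} (hb : b.Prime) {s n m : ℕ} (hs : 0 < s) {α : ℕ} (hα : 1 ≤ α)
    (C : Fin s → Matrix (Fin n) (Fin m) (ZMod b)) {z : ℕ} (hz : minWeight b α C ≤ z)
    (F : Finset (Fin s → ℕ)) (hF : ∀ k ∈ F, k ∈ dualNet b C ∧ dickWeightV b α k = z) :
    F.card ≤ b ^ ((z - minWeight b α C) / α) * ((z + 1) ^ (s * α - 1) * (b - 1) ^ (s * α)) := by
  have hb2 := hb.two_le
  have : Nonempty (Fin s × Fin α) := ⟨(⟨0, hs⟩, ⟨0, hα⟩)⟩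
  let f : (Fin s → ℕ) → (Fin s × Fin α → ℕ) × (Fin s × Fin α → ℕ) := fun k =>
    (fun x => cpos b (k x.1) x.2, fun x => kdig b (k x.1) x.2)
  have h1 : F.card ≤ b ^ ((z - minWeight b α C) / α) * (F.image f).card := by
    apply Finset.card_le_mul_card_image
    intro a _
    apply aux_fiber hb hα C hz
    · intro k hk
      exact hF k (Finset.mem_filter.1 hk).1
    · intro k hk k' hk' j i hi
      have h := (Finset.mem_filter.1 hk).2.trans (Finset.mem_filter.1 hk').2.symm
      have ha := congrFun (congrArg Prod.fst h) (j, ⟨i, hi⟩)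
      have hb' := congrFun (congrArg Prod.snd h) (j, ⟨i, hi⟩)
      exact ⟨ha, hb'⟩
  refine h1.trans (Nat.mul_le_mul_left _ ?_)
  have hsub : F.image f ⊆ ((Finset.univ : Finset (Fin s × Fin α)).piAntidiag z) ×ˢ
      (Fintype.piFinset fun _ : Fin s × Fin α => Finset.Icc 1 (b - 1)) := by
    intro a ha
    obtain ⟨k, hk, rfl⟩ := Finset.mem_image.1 ha
    rw [Finset.mem_product]
    constructor
    · rw [Finset.mem_piAntidiag]
      refine ⟨?_, fun _ _ => Finset.mem_univ _⟩
      rw [← (hF k hk).2]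
      simp only [f, dickWeightV, aux_dick_s4, Fintype.sum_prod_type, Finset.sum_range]
    · rw [Fintype.mem_piFinset]
      intro x
      exact aux_kdig_mem hb2 _ _
  refine (Finset.card_le_card hsub).trans ?_
  rw [Finset.card_product]
  refine Nat.mul_le_mul ?_ ?_
  · have := aux_card_antidiag (ι := Fin s × Fin α) z
    simpa using this
  · rw [Fintype.card_piFinset]; simp

end helpers

/-- Lemma 3.3(1): counting dual-net elements of given Dick weight `μ_α`, `α ≥ 2`. -/
theorem stmt_4 (b : ℕ) (hb : b.Prime) (α : ℕ) (hα : 2 ≤ α) (s n m : ℕ)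
    (C : Fin s → Matrix (Fin n) (Fin m) (ZMod b)) (z : ℕ) :
    (z < minWeight b α C →
      {k : Fin s → ℕ | k ∈ dualNet b C ∧ k ≠ 0 ∧ dickWeightV b α k = z}.ncard = 0) ∧
    (minWeight b α C ≤ z →
      {k : Fin s → ℕ | k ∈ dualNet b C ∧ k ≠ 0 ∧ dickWeightV b α k = z}.Finite ∧
      ({k : Fin s → ℕ | k ∈ dualNet b C ∧ k ≠ 0 ∧ dickWeightV b α k = z}.ncard : ℝ)
        ≤ ((b : ℝ) - 1) ^ (s * α)
            * (b : ℝ) ^ (((z : ℝ) - (minWeight b α C : ℝ)) / (α : ℝ))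
            * ((z : ℝ) + 2) ^ (s * α - 1)) := by
  have hb2 := hb.two_le
  constructor
  · intro hlt
    have : {k : Fin s → ℕ | k ∈ dualNet b C ∧ k ≠ 0 ∧ dickWeightV b α k = z} = ∅ := by
      rw [Set.eq_empty_iff_forall_notMem]
      rintro k ⟨h1, h2, h3⟩
      exact Nat.notMem_of_lt_sInf hlt ⟨k, ⟨h1, h2⟩, h3⟩
    rw [this, Set.ncard_empty]
  · intro hz
    have hfin : {k : Fin s → ℕ | k ∈ dualNet b C ∧ k ≠ 0 ∧ dickWeightV b α k = z}.Finite := by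
      apply Set.Finite.subset
        (Finset.finite_toSet (Fintype.piFinset fun _ : Fin s => Finset.range (b ^ z)))
      rintro k ⟨-, -, h3⟩
      simp only [Finset.mem_coe, Fintype.mem_piFinset, Finset.mem_range]
      intro j
      apply aux_lt_of_weight (α := α) hb2 (by omega)
      rw [← h3]
      exact Finset.single_le_sum (f := fun j => dickWeight b α (k j))
        (fun _ _ => Nat.zero_le _) (Finset.mem_univ j)
    refine ⟨hfin, ?_⟩
    have hb1 : (0 : ℝ) ≤ (b : ℝ) - 1 := by
      have : (1 : ℝ) ≤ b := by exact_mod_cast hb.one_le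
      linarith
    rcases Nat.eq_zero_or_pos s with rfl | hs
    · have : {k : Fin 0 → ℕ | k ∈ dualNet b C ∧ k ≠ 0 ∧ dickWeightV b α k = z} = ∅ := by
        rw [Set.eq_empty_iff_forall_notMem]
        rintro k ⟨h1, h2, h3⟩
        exact h2 (Subsingleton.elim _ _)
      rw [this, Set.ncard_empty]
      simp only [Nat.cast_zero]
      positivity
    rw [Set.ncard_eq_toFinset_card _ hfin]
    have hmain := aux_main hb hs (by omega : 1 ≤ α) C hz hfin.toFinset (by
      intro k hk
      rw [Set.Finite.mem_toFinset] at hk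
      exact ⟨hk.1, hk.2.2⟩)
    have hmainR : (hfin.toFinset.card : ℝ) ≤ (b : ℝ) ^ ((z - minWeight b α C) / α) *
        (((z : ℝ) + 1) ^ (s * α - 1) * ((b : ℝ) - 1) ^ (s * α)) := by
      have h := (Nat.cast_le (α := ℝ)).2 hmain
      push_cast [Nat.cast_sub hb.one_le] at h
      exact h
    have hpow : (b : ℝ) ^ ((z - minWeight b α C) / α) ≤
        (b : ℝ) ^ (((z : ℝ) - (minWeight b α C : ℝ)) / (α : ℝ)) := by
      rw [← Real.rpow_natCast]
      apply Real.rpow_le_rpow_of_exponent_le (by exact_mod_cast hb.one_le)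
      have := Nat.cast_div_le (α := ℝ) (m := z - minWeight b α C) (n := α)
      rwa [Nat.cast_sub hz] at this
    calc (hfin.toFinset.card : ℝ) ≤ _ := hmainR
      _ ≤ (b : ℝ) ^ (((z : ℝ) - (minWeight b α C : ℝ)) / (α : ℝ)) *
        (((z : ℝ) + 2) ^ (s * α - 1) * ((b : ℝ) - 1) ^ (s * α)) := by
          gcongr
          norm_num
      _ = _ := by ring
end

section
/- Let b be a prime, alpha, m, s in N and t in N_0, and let C_1,...,C_{alpha*s} in F_b^{m x m} be generating matrices of a digital net P over F_b in dimension alpha*s satisfying mu_1(P^perp) >= m - t + 1 (i.e., P is a digital (t, m, alpha*s)-net). Define matrices D_1,...,D_s in F_b^{alpha*m x m} by letting, for 1 <= h <= m and 1 <= i <= alpha, the (alpha(h-1)+i)-th row of D_j be the h-th row of C_{alpha(j-1)+i}. Then the digital net Q over F_b with generating matrices D_1,...,D_s satisfies mu_alpha(Q^perp) >= alpha*m - alpha*min(m, t + floor(s(alpha-1)/2)) + 1; that is, Q is an order alpha digital (t_alpha, m, s)-net over F_b with t_alpha <= alpha*min(m, t + floor(s(alpha-1)/2)). -/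
open MeasureTheory Finset Matrix

lemma nd_lt_of_ne {b k i : ℕ} (hb : 1 < b) (h : ndigit b k i ≠ 0) : i < k := by
  by_contra hc
  apply h
  have h1 : k < b ^ i := lt_of_le_of_lt (not_lt.mp hc) (Nat.lt_pow_self hb)
  simp [ndigit, Nat.div_eq_of_lt h1]

lemma mem_nzPos {b k i : ℕ} (hb : 1 < b) : i ∈ nzPos b k ↔ ndigit b k i ≠ 0 := by
  simp only [nzPos, List.mem_reverse, Finset.mem_sort, Finset.mem_filter, Finset.mem_range]
  exact ⟨fun h => h.2, fun h => ⟨nd_lt_of_ne hb h, h⟩⟩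

lemma nzPos_sorted (b k : ℕ) : (nzPos b k).Pairwise (· ≥ ·) := by
  unfold nzPos
  rw [List.pairwise_reverse]
  exact Finset.pairwise_sort _ _

lemma list_take_bound (L : List ℕ) : L.Pairwise (· ≥ ·) → ∀ (a : ℕ) (A : Finset ℕ),
    (∀ x ∈ A, x ∈ L) → A.card ≤ a → ∑ x ∈ A, (x + 1) ≤ ((L.take a).map (· + 1)).sum := by
  induction L with
  | nil =>
    intro _ a A hA _
    have : A = ∅ := Finset.eq_empty_of_forall_notMem (fun x hx => by simpa using hA x hx)
    simp [this]
  | cons y L ih =>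
    intro hL a A hA hc
    rw [List.pairwise_cons] at hL
    rcases A.eq_empty_or_nonempty with rfl | hne
    · simp
    cases a with
    | zero => simp at hc; simp [hc] at hne
    | succ a =>
      have key : ∀ x ∈ A, x ≤ y → (∀ z ∈ A.erase x, z ∈ L) →
          ∑ x ∈ A, (x + 1) ≤ (((y :: L).take (a+1)).map (· + 1)).sum := by
        intro x hx hxy hz
        have h1 := ih hL.2 a (A.erase x) hz (by rw [Finset.card_erase_of_mem hx]; omega)
        rw [← Finset.add_sum_erase A _ hx]
        simp only [List.take_succ_cons, List.map_cons, List.sum_cons]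
        omega
      by_cases hy : y ∈ A
      · refine key y hy le_rfl ?_
        intro z hz
        have h2 := hA z (Finset.mem_of_mem_erase hz)
        rcases List.mem_cons.mp h2 with h | h
        · exact absurd h (Finset.ne_of_mem_erase hz)
        · exact h
      · have hA2 : ∀ z ∈ A, z ∈ L := by
          intro z hz
          rcases List.mem_cons.mp (hA z hz) with h | h
          · exact absurd (h ▸ hz) hy
          · exact h
        obtain ⟨x, hx⟩ := hne
        exact key x hx (hL.1 x (hA2 x hx)) (fun z hz => hA2 z (Finset.mem_of_mem_erase hz))

lemma dick_ge {b k a : ℕ} (hb : 1 < b) (A : Finset ℕ) (hA : ∀ x ∈ A, ndigit b k x ≠ 0)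
    (hc : A.card ≤ a) : ∑ x ∈ A, (x + 1) ≤ dickWeight b a k :=
  list_take_bound _ (nzPos_sorted b k) a A (fun x hx => (mem_nzPos hb).mpr (hA x hx)) hc

lemma dick_one {b k : ℕ} (hb : 1 < b) (h : dickWeight b 1 k ≠ 0) :
    ndigit b k (dickWeight b 1 k - 1) ≠ 0 := by
  rw [← mem_nzPos hb]
  unfold dickWeight at *
  cases hL : nzPos b k with
  | nil => simp [hL] at h
  | cons y L => simp

lemma exists_nd {b k : ℕ} (hb : 1 < b) (hk : k ≠ 0) : ∃ i, ndigit b k i ≠ 0 := by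
  refine ⟨Nat.log b k, ?_⟩
  unfold ndigit
  have h1 := Nat.pow_log_le_self b hk
  have h2 := Nat.lt_pow_succ_log_self hb k
  have hp : 0 < b ^ Nat.log b k := by positivity
  have h3 : k / b ^ Nat.log b k < b := by
    rw [Nat.div_lt_iff_lt_mul hp]
    rw [Nat.succ_eq_add_one, pow_succ, mul_comm] at h2
    exact h2
  rw [Nat.mod_eq_of_lt h3]
  exact (Nat.div_pos h1 hp).ne'

lemma nd_sum {b : ℕ} (hb : 1 < b) (m : ℕ) : ∀ (d : ℕ → ℕ) (_ : ∀ i, d i < b) (h : ℕ),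
    ndigit b (∑ i ∈ Finset.range m, d i * b ^ i) h = if h < m then d h else 0 := by
  induction m with
  | zero => intro d _ h; simp [ndigit]
  | succ m ih =>
    intro d hd h
    have e : ∑ i ∈ Finset.range (m+1), d i * b ^ i
        = d 0 + b * ∑ i ∈ Finset.range m, d (i+1) * b ^ i := by
      rw [Finset.sum_range_succ', Finset.mul_sum, add_comm]
      congr 1
      · simp
      · exact Finset.sum_congr rfl (fun i _ => by ring)
    rw [e]
    cases h with
    | zero => simp [ndigit, Nat.mod_eq_of_lt (hd 0)]
    | succ h =>
      have h1 := ih (fun i => d (i+1)) (fun i => hd _) h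
      simp only [ndigit] at h1 ⊢
      rw [pow_succ', ← Nat.div_div_eq_div_mul, Nat.add_mul_div_left _ _ (by omega : 0 < b),
        Nat.div_eq_of_lt (hd 0), zero_add, h1]
      simp

lemma nd_lt {b k i : ℕ} (hb : 1 < b) : ndigit b k i < b := Nat.mod_lt _ (by omega)

lemma idx_lt {α s j i : ℕ} (hj : j < s) (hi : i < α) : α * j + i < α * s := by
  calc α * j + i < α * j + α := by omega
    _ = α * (j + 1) := by ring
    _ ≤ α * s := Nat.mul_le_mul_left α hj

/-- one-coordinate inequality -/
lemma coord_ineq {b α k : ℕ} (hb : 1 < b) (w : ℕ → ℕ)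
    (hw : ∀ i < α, w i ≠ 0 → ndigit b k (α * (w i - 1) + i) ≠ 0) :
    2 * (α * ∑ i ∈ Finset.range α, w i) ≤ 2 * dickWeight b α k + α * (α - 1) := by
  set I := (Finset.range α).filter (fun i => w i ≠ 0) with hI
  have hinj : Set.InjOn (fun i => α * (w i - 1) + i) (I : Set ℕ) := by
    intro x hx y hy hxy
    simp only [hI, Finset.coe_filter, Finset.mem_range, Set.mem_setOf_eq] at hx hy
    have := congrArg (· % α) hxy
    simpa [Nat.mul_add_mod, Nat.mod_eq_of_lt hx.1, Nat.mod_eq_of_lt hy.1] using this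
  have h1 := dick_ge (k := k) (a := α) hb (I.image (fun i => α * (w i - 1) + i)) (by
      intro x hx
      obtain ⟨i, hi, rfl⟩ := Finset.mem_image.mp hx
      rw [hI, Finset.mem_filter, Finset.mem_range] at hi
      exact hw i hi.1 hi.2) (by
      refine Finset.card_image_le.trans ((Finset.card_filter_le _ _).trans ?_)
      simp)
  rw [Finset.sum_image hinj, hI, Finset.sum_filter] at h1
  have h2 : α * ∑ i ∈ Finset.range α, w i ≤
      ∑ i ∈ Finset.range α, (if w i ≠ 0 then α * (w i - 1) + i + 1 else 0)
      + ∑ i ∈ Finset.range α, (α - 1 - i) := by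
    rw [Finset.mul_sum, ← Finset.sum_add_distrib]
    apply Finset.sum_le_sum
    intro i hi
    rw [Finset.mem_range] at hi
    by_cases h : w i = 0
    · simp [h]
    · obtain ⟨v, hv⟩ := Nat.exists_eq_succ_of_ne_zero h
      simp only [hv, Nat.succ_eq_add_one, Nat.add_sub_cancel, mul_add, mul_one]
      rw [if_pos (by omega)]
      omega
  have h3 : (∑ i ∈ Finset.range α, (α - 1 - i)) * 2 = α * (α - 1) := by
    have := Finset.sum_range_reflect (fun i => i) α
    rw [this, Finset.sum_range_id_mul_two]
  omega

lemma key_weight {b α m s : ℕ} (hb : 1 < b) (hα : 0 < α) (t : ℕ)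
    (C : Fin (α * s) → Matrix (Fin m) (Fin m) (ZMod b))
    (hC : (m : ℤ) - t + 1 ≤ minWeight b 1 C)
    (D : Fin s → Matrix (Fin (α * m)) (Fin m) (ZMod b))
    (hD : ∀ (j : Fin s) (r : Fin (α * m)) (c : Fin m),
      D j r c = C ⟨α * j.val + r.val % α, idx_lt j.isLt (Nat.mod_lt _ hα)⟩
        ⟨r.val / α, Nat.div_lt_of_lt_mul r.isLt⟩ c)
    (k : Fin s → ℕ) (hk : k ∈ dualNet b D) (hk0 : k ≠ 0)
    (hsm : ∀ j r, ndigit b (k j) r ≠ 0 → r < α * m) :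
    2 * ((α : ℤ) * (m - t + 1)) ≤ 2 * dickWeightV b α k + s * (α * (α - 1)) := by
  have hdiv : ∀ p : Fin (α * s), p.val / α < s := fun p => Nat.div_lt_of_lt_mul p.isLt
  let l : Fin (α * s) → ℕ := fun p =>
    ∑ h ∈ Finset.range m, ndigit b (k ⟨p.val / α, hdiv p⟩) (α * h + p.val % α) * b ^ h
  have hl : ∀ p h, ndigit b (l p) h =
      if h < m then ndigit b (k ⟨p.val / α, hdiv p⟩) (α * h + p.val % α) else 0 :=
    fun p h => nd_sum hb m (fun h => ndigit b (k ⟨p.val / α, hdiv p⟩) (α * h + p.val % α))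
      (fun i => nd_lt hb) h
  have hld : l ∈ dualNet b C := by
    unfold dualNet at hk ⊢
    rw [Set.mem_setOf_eq] at hk ⊢
    rw [← hk]
    funext c
    simp only [Finset.sum_apply, Matrix.mulVec, dotProduct, Matrix.transpose_apply, digitVec]
    rw [← Fintype.sum_prod_type', ← Fintype.sum_prod_type']
    refine Finset.sum_bij'
      (fun x _ => (⟨x.1.val / α, hdiv x.1⟩,
        ⟨α * x.2.val + x.1.val % α, idx_lt x.2.isLt (Nat.mod_lt _ hα)⟩))
      (fun y _ => (⟨α * y.1.val + y.2.val % α, idx_lt y.1.isLt (Nat.mod_lt _ hα)⟩,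
        ⟨y.2.val / α, Nat.div_lt_of_lt_mul y.2.isLt⟩))
      (fun _ _ => Finset.mem_univ _) (fun _ _ => Finset.mem_univ _) ?_ ?_ ?_
    · rintro ⟨p, h⟩ _
      ext
      · simp [Nat.mul_add_mod, Nat.div_add_mod]
      · simp [Nat.mul_add_div hα, Nat.div_eq_of_lt (Nat.mod_lt _ hα)]
    · rintro ⟨p, h⟩ _
      ext
      · simp [Nat.mul_add_div hα, Nat.div_eq_of_lt (Nat.mod_lt _ hα)]
      · simp [Nat.mul_add_mod, Nat.div_add_mod]
    · rintro ⟨p, h⟩ _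
      simp only [hD, hl, h.isLt, if_true]
      congr 2
      · congr 1
        ext; simp [Nat.mul_add_mod, Nat.div_add_mod]
      · ext; simp [Nat.mul_add_div hα, Nat.div_eq_of_lt (Nat.mod_lt _ hα)]
  have hl0 : l ≠ 0 := by
    intro h0
    apply hk0
    funext j
    by_contra hj
    obtain ⟨r, hr⟩ := exists_nd hb hj
    have hrm := hsm j r hr
    have h1 := hl ⟨α * j.val + r % α, idx_lt j.isLt (Nat.mod_lt _ hα)⟩ (r / α)
    rw [if_pos (Nat.div_lt_of_lt_mul hrm)] at h1
    simp only [h0, Nat.mul_add_div hα, Nat.div_eq_of_lt (Nat.mod_lt _ hα), Nat.mul_add_mod,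
      Nat.mod_mod, Nat.div_add_mod, add_zero, Fin.eta] at h1
    exact hr (by rw [← h1]; simp [ndigit])
  have hmin : minWeight b 1 C ≤ dickWeightV b 1 l := Nat.sInf_le ⟨l, ⟨hld, hl0⟩, rfl⟩
  let W : Fin s → ℕ → ℕ := fun j i =>
    if h : i < α then dickWeight b 1 (l ⟨α * j.val + i, idx_lt j.isLt h⟩) else 0
  have hsum : dickWeightV b 1 l = ∑ j : Fin s, ∑ i ∈ Finset.range α, W j i := by
    unfold dickWeightV
    simp_rw [Finset.sum_range]
    rw [← Fintype.sum_prod_type']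
    refine Finset.sum_bij'
      (fun x _ => (⟨x.val / α, hdiv x⟩, ⟨x.val % α, Nat.mod_lt _ hα⟩))
      (fun y _ => ⟨α * y.1.val + y.2.val, idx_lt y.1.isLt y.2.isLt⟩)
      (fun _ _ => Finset.mem_univ _) (fun _ _ => Finset.mem_univ _) ?_ ?_ ?_
    · intro p _
      ext
      simp [Nat.div_add_mod]
    · rintro ⟨p, h⟩ _
      ext
      · simp [Nat.mul_add_div hα, Nat.div_eq_of_lt h.isLt]
      · simp [Nat.mul_add_mod, Nat.mod_eq_of_lt h.isLt]
    · intro p _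
      simp [W, Nat.div_add_mod, Nat.mod_lt _ hα]
  have hco : ∀ j, 2 * (α * ∑ i ∈ Finset.range α, W j i)
      ≤ 2 * dickWeight b α (k j) + α * (α - 1) := by
    intro j
    apply coord_ineq hb
    intro i hi hw
    simp only [W, hi, dif_pos] at hw ⊢
    have h1 := dick_one hb hw
    rw [hl] at h1
    split_ifs at h1 with h2
    · simpa [Nat.mul_add_div hα, Nat.div_eq_of_lt hi, Nat.mul_add_mod, Nat.mod_eq_of_lt hi]
        using h1
    · exact absurd rfl h1
  have htot := Finset.sum_le_sum (fun j (_ : j ∈ (Finset.univ : Finset (Fin s))) => hco j)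
  rw [← Finset.mul_sum, ← Finset.mul_sum, ← hsum, Finset.sum_add_distrib, ← Finset.mul_sum,
    Finset.sum_const, Finset.card_univ, Fintype.card_fin, smul_eq_mul] at htot
  change 2 * (α * dickWeightV b 1 l) ≤ 2 * dickWeightV b α k + _ at htot
  obtain ⟨a, rfl⟩ := Nat.exists_eq_succ_of_ne_zero hα.ne'
  simp only [Nat.succ_eq_add_one, Nat.add_sub_cancel] at htot ⊢
  zify at htot hmin
  push_cast
  have h5 : (m : ℤ) - t + 1 ≤ dickWeightV b 1 l := hC.trans hmin
  have h6 := mul_le_mul_of_nonneg_left h5 (by positivity : (0 : ℤ) ≤ (a : ℤ) + 1)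
  linarith

/-- Lemma 3.8(1) (digit interlacing): if `P` is a digital `(t,m,αs)`-net over `F_b` with
generating matrices `C_1,...,C_{αs} ∈ F_b^{m×m}`, then the interlaced matrices
`D_1,...,D_s ∈ F_b^{αm×m}` generate an order `α` digital `(t_α,m,s)`-net over `F_b`
with `t_α ≤ α min(m, t + ⌊s(α-1)/2⌋)`. -/
theorem stmt_7 (b : ℕ) (hb : b.Prime) (α m s : ℕ) (hα : 0 < α) (hm : 0 < m) (hs : 0 < s)
    (t : ℕ) (C : Fin (α * s) → Matrix (Fin m) (Fin m) (ZMod b))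
    (hC : (m : ℤ) - t + 1 ≤ minWeight b 1 C)
    (D : Fin s → Matrix (Fin (α * m)) (Fin m) (ZMod b))
    (hD : ∀ (j : Fin s) (r : Fin (α * m)) (c : Fin m),
      D j r c = C ⟨α * j.val + r.val % α, by
          have h1 : r.val % α < α := Nat.mod_lt _ hα
          have h2 : j.val + 1 ≤ s := j.isLt
          calc α * j.val + r.val % α < α * j.val + α := by omega
            _ = α * (j.val + 1) := by ring
            _ ≤ α * s := Nat.mul_le_mul_left α h2⟩
        ⟨r.val / α, Nat.div_lt_of_lt_mul r.isLt⟩ c) :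
    (α * m : ℤ) - α * min m (t + s * (α - 1) / 2) + 1 ≤ minWeight b α D := by
  have hb1 := hb.one_lt
  have hne : (dickWeightV b α '' {k | k ∈ dualNet b D ∧ k ≠ 0}).Nonempty := by
    refine ⟨_, fun _ => b ^ (α * m), ⟨?_, ?_⟩, rfl⟩
    · have : digitVec b (α * m) (b ^ (α * m)) = 0 := by
        funext i
        have : ndigit b (b ^ (α * m)) i.val = 0 := by
          unfold ndigit
          rw [Nat.pow_div i.isLt.le hb.pos]
          exact Nat.mod_eq_zero_of_dvd (dvd_pow_self b (by have := i.isLt; omega))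
        simp [digitVec, this]
      simp [dualNet, this]
    · intro h
      have := congrFun h ⟨0, hs⟩
      simp [hb.ne_zero] at this
  obtain ⟨k, ⟨hk, hk0⟩, hkw⟩ := Nat.sInf_mem hne
  change dickWeightV b α k = minWeight b α D at hkw
  rw [← hkw]
  push_cast [Nat.cast_sub (show 1 ≤ α from hα)]
  have hone : ∀ j r, ndigit b (k j) r ≠ 0 → r + 1 ≤ dickWeightV b α k := by
    intro j r hr
    have h1 := dick_ge (k := k j) (a := α) hb1 {r} (by simpa using hr) (by rw [Finset.card_singleton]; exact hα)
    rw [Finset.sum_singleton] at h1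
    exact h1.trans (Finset.single_le_sum (f := fun j => dickWeight b α (k j))
      (fun _ _ => Nat.zero_le _) (Finset.mem_univ j))
  have hα1 : (1 : ℤ) ≤ α := by exact_mod_cast hα
  have hT : 0 ≤ (s : ℤ) * (α - 1) / 2 :=
    Int.ediv_nonneg (mul_nonneg (by positivity) (by linarith)) (by norm_num)
  set T : ℤ := (s : ℤ) * (α - 1) / 2 with hTdef
  have hT2 : (s : ℤ) * (α - 1) ≤ 2 * T + 1 := by omega
  by_cases hsm : ∀ j r, ndigit b (k j) r ≠ 0 → r < α * m
  · rcases le_total (m : ℤ) (t + T) with hle | hle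
    · rw [min_eq_left hle]
      obtain ⟨j, hj⟩ := Function.ne_iff.mp hk0
      obtain ⟨r, hr⟩ := exists_nd hb1 hj
      have := hone j r hr
      zify at this
      linarith [Int.natCast_nonneg r]
    · rw [min_eq_right hle]
      have h1 := key_weight hb1 hα t C hC D hD k hk hk0 hsm
      rcases eq_or_lt_of_le hα1 with h | h
      · rw [← h] at h1 ⊢
        linarith
      · have h2 := mul_le_mul_of_nonneg_left hT2 (by linarith : (0 : ℤ) ≤ α)
        nlinarith
  · push Not at hsm
    obtain ⟨j, r, hr, hrm⟩ := hsm
    have h1 := hone j r hr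
    have h2 : α * m + 1 ≤ dickWeightV b α k := by omega
    zify at h2
    have : 0 ≤ (α : ℤ) * min (m : ℤ) (t + T) :=
      mul_nonneg (by linarith) (le_min (by positivity) (by positivity))
    linarith
end
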